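/- arXiv:1503.02217 — 2 statements merged into one kernel-verified Lean document; each statement's English description precedes it below -/
import Mathlib

section
/- Let θ be an m×m matrix with nonnegative real entries and let M be a positive integer. Then the degree-M Bethe permanent satisfies perm_{B,M}(θ) ≤ perm(θ); equivalently, the arithmetic average over all P ∈ 𝒫_M^m of perm(θ^↑P) is at most (perm(θ))^M. -/
open scoped BigOperators

/-- The `P`-lifting `θ^↑P` of an `m × m` matrix `θ`, where the block permutation matrices
`P_{jl}` are given by the permutations `σ j l`. -/
def Matrix.plift {R : Type*} [CommSemiring R] {m M : ℕ} (θ : Matrix (Fin m) (Fin m) R)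
    (σ : Fin m → Fin m → Equiv.Perm (Fin M)) :
    Matrix (Fin m × Fin M) (Fin m × Fin M) R :=
  Matrix.of fun p q => θ p.1 q.1 * (if σ p.1 q.1 p.2 = q.2 then 1 else 0)

/-- The arithmetic average of `perm (θ^↑P)` over all `P ∈ 𝒫_M^m`. -/
noncomputable def betheAvg {m : ℕ} (M : ℕ) (θ : Matrix (Fin m) (Fin m) ℝ) : ℝ :=
  (∑ σ : Fin m → Fin m → Equiv.Perm (Fin M), (θ.plift σ).permanent) /
    (Fintype.card (Fin m → Fin m → Equiv.Perm (Fin M)) : ℝ)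

/-- The degree-`M` Bethe permanent `perm_{B,M}(θ) = ⟨perm(θ^↑P)⟩^{1/M}`. -/
noncomputable def bethePermanent {m : ℕ} (M : ℕ) (θ : Matrix (Fin m) (Fin m) ℝ) : ℝ :=
  (betheAvg M θ) ^ ((M : ℝ)⁻¹)


section MD
variable {ι κ : Type*} [DecidableEq ι] [DecidableEq κ]

/-- Monomer-dimer partition function. -/
def mdZ (w : ι → κ → ℝ) (r : ι → ℝ) (c : κ → ℝ) : List ι → Finset κ → ℝ
  | [], C => ∏ j ∈ C, c j
  | i :: L, C => r i * mdZ w r c L C + ∑ k ∈ C, w i k * mdZ w r c L (C.erase k)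

theorem mdZ_nonneg {w : ι → κ → ℝ} {r : ι → ℝ} {c : κ → ℝ} (hw : ∀ i j, 0 ≤ w i j)
    (hr : ∀ i, 0 ≤ r i) (hc : ∀ j, 0 ≤ c j) (L : List ι) (C : Finset κ) :
    0 ≤ mdZ w r c L C := by
  induction L generalizing C with
  | nil => exact Finset.prod_nonneg fun j _ => hc j
  | cons i L ih =>
    exact add_nonneg (mul_nonneg (hr i) (ih C))
      (Finset.sum_nonneg fun k _ => mul_nonneg (hw i k) (ih _))

theorem mdZ_perm (w : ι → κ → ℝ) (r : ι → ℝ) (c : κ → ℝ) {L L' : List ι} (h : L.Perm L') :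
    ∀ C : Finset κ, mdZ w r c L C = mdZ w r c L' C := by
  induction h with
  | nil => intro C; rfl
  | cons i _ ih => intro C; simp only [mdZ, ih]
  | trans _ _ ih1 ih2 => intro C; rw [ih1, ih2]
  | swap i i' L =>
    intro C
    simp only [mdZ, mul_add, Finset.sum_add_distrib, Finset.mul_sum]
    have h2 : ∑ k ∈ C, ∑ k' ∈ C.erase k, w i k * (w i' k' * mdZ w r c L ((C.erase k).erase k'))
      = ∑ k ∈ C, ∑ k' ∈ C.erase k, w i' k * (w i k' * mdZ w r c L ((C.erase k).erase k')) := by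
      rw [Finset.sum_comm' (s' := fun k => C.erase k) (t' := C)]
      · refine Finset.sum_congr rfl fun k _ => Finset.sum_congr rfl fun k' _ => ?_
        rw [Finset.erase_right_comm]; ring
      · intro x y; simp only [Finset.mem_erase]; tauto
    rw [h2]
    have e1 : ∀ k, r i * (w i' k * mdZ w r c L (C.erase k))
      = w i' k * (r i * mdZ w r c L (C.erase k)) := fun k => by ring
    have e2 : ∀ k, r i' * (w i k * mdZ w r c L (C.erase k))
      = w i k * (r i' * mdZ w r c L (C.erase k)) := fun k => by ring
    simp only [e1, e2]
    ring

theorem mdZ_col (w : ι → κ → ℝ) (r : ι → ℝ) (c : κ → ℝ) (L : List ι) :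
    ∀ (C : Finset κ) (j : κ), j ∈ C → mdZ w r c L C = c j * mdZ w r c L (C.erase j)
      + (L.map fun i => w i j * mdZ w r c (L.erase i) (C.erase j)).sum := by
  induction L with
  | nil =>
    intro C j hj
    simp [mdZ, Finset.mul_prod_erase C c hj]
  | cons i L ih =>
    intro C j hj
    have h1 : (L.map fun i' => w i' j * mdZ w r c ((i :: L).erase i') (C.erase j))
        = L.map fun i' => w i' j * mdZ w r c (i :: L.erase i') (C.erase j) := by
      refine List.map_congr_left fun i' hi' => ?_
      congr 1
      apply mdZ_perm
      by_cases h : i = i'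
      · subst h
        rw [List.erase_cons_head]
        exact List.perm_cons_erase hi'
      · rw [List.erase_cons_tail (by simpa using h)]
    have h2 : ∀ k ∈ C.erase j, mdZ w r c L (C.erase k) =
        c j * mdZ w r c L ((C.erase j).erase k) +
        (L.map fun i' => w i' j * mdZ w r c (L.erase i') ((C.erase j).erase k)).sum := by
      intro k hk
      rw [ih (C.erase k) j (by simp at hk ⊢; exact ⟨fun h => hk.1 h.symm, hj⟩),
        Finset.erase_right_comm]
    rw [List.map_cons, List.sum_cons, List.erase_cons_head, h1]
    simp only [mdZ]
    rw [← Finset.add_sum_erase C _ hj, ih C j hj]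
    rw [Finset.sum_congr rfl fun k hk => by rw [h2 k hk]]
    have h3 : ∀ (F : ι → κ → ℝ) (T : Finset κ) (u : κ → ℝ) (a : ι → ℝ) (l : List ι),
        (l.map fun i' => a i' * ∑ k ∈ T, u k * F i' k).sum
        = ∑ k ∈ T, u k * (l.map fun i' => a i' * F i' k).sum := by
      intro F T u a l
      induction l with
      | nil => simp
      | cons x l ihl =>
        simp only [List.map_cons, List.sum_cons]
        rw [ihl]
        simp only [mul_add, Finset.sum_add_distrib]
        rw [Finset.mul_sum]
        congr 1
        exact Finset.sum_congr rfl fun k _ => by ring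
    have h4 : ∀ (F : ι → ℝ) (a : ι → ℝ) (b : ℝ) (l : List ι),
        (l.map fun i' => a i' * (b * F i')).sum = b * (l.map fun i' => a i' * F i').sum := by
      intro F a b l
      rw [← List.sum_map_mul_left]
      congr 1
      exact List.map_congr_left fun k _ => by ring
    simp only [mul_add, List.sum_map_add, Finset.sum_add_distrib]
    rw [h3, h4, Finset.mul_sum]
    have e1 : ∀ k, c j * (w i k * mdZ w r c L ((C.erase j).erase k))
      = w i k * (c j * mdZ w r c L ((C.erase j).erase k)) := fun k => by ring
    simp only [e1]
    ring

theorem mdZ_ineq {w : ι → κ → ℝ} {r : ι → ℝ} {c : κ → ℝ} (hw : ∀ i j, 0 ≤ w i j)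
    (hr : ∀ i, 0 ≤ r i) (hc : ∀ j, 0 ≤ c j) (n : ℕ) : ∀ (L : List ι), L.length = n →
    (∀ (C : Finset κ) (j k : κ), j ∈ C → k ∈ C → j ≠ k →
      mdZ w r c L C * mdZ w r c L ((C.erase j).erase k) ≤
      mdZ w r c L (C.erase j) * mdZ w r c L (C.erase k)) ∧
    (∀ (i : ι) (C : Finset κ) (j : κ), j ∈ C →
      mdZ w r c L C * mdZ w r c (i :: L) (C.erase j) ≤
      mdZ w r c (i :: L) C * mdZ w r c L (C.erase j)) := by
  induction n using Nat.strong_induction_on with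
  | _ n IH =>
  intro L hL
  have same : (∀ (C : Finset κ) (j k : κ), j ∈ C → k ∈ C → j ≠ k →
      mdZ w r c L C * mdZ w r c L ((C.erase j).erase k) ≤
      mdZ w r c L (C.erase j) * mdZ w r c L (C.erase k)) := by
    intro C j k hj hk hjk
    rw [mdZ_col w r c L C j hj, mdZ_col w r c L (C.erase k) j (by simp [hj, hjk]),
      Finset.erase_right_comm (a := k)]
    set H := C.erase j with hH
    have hkH : k ∈ H := by simp [hH, hk, hjk.symm]
    have key : (L.map fun i => w i j * mdZ w r c (L.erase i) H).sum * mdZ w r c L (H.erase k)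
        ≤ mdZ w r c L H * (L.map fun i => w i j * mdZ w r c (L.erase i) (H.erase k)).sum := by
      rw [← List.sum_map_mul_right, ← List.sum_map_mul_left]
      refine List.sum_le_sum fun i hi => ?_
      have hlen : (L.erase i).length < n := by
        rw [List.length_erase_of_mem hi]
        have := List.length_pos_of_mem hi
        omega
      have h := (IH _ hlen (L.erase i) rfl).2 i H k hkH
      rw [← mdZ_perm w r c (List.perm_cons_erase hi), ← mdZ_perm w r c (List.perm_cons_erase hi)]
        at h
      nlinarith [mul_le_mul_of_nonneg_left h (hw i j)]
    nlinarith [key]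
  refine ⟨same, ?_⟩
  intro i C j hj
  simp only [mdZ]
  have key : mdZ w r c L C * ∑ k ∈ C.erase j, w i k * mdZ w r c L ((C.erase j).erase k)
      ≤ (∑ k ∈ C, w i k * mdZ w r c L (C.erase k)) * mdZ w r c L (C.erase j) := by
    rw [Finset.mul_sum, Finset.sum_mul]
    refine le_trans (Finset.sum_le_sum (g := fun k => w i k * mdZ w r c L (C.erase k) * mdZ w r c L (C.erase j)) fun k hk => ?_)
      (Finset.sum_le_sum_of_subset_of_nonneg (Finset.erase_subset j C) fun k _ _ => ?_)
    · simp only [Finset.mem_erase] at hk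
      have := same C j k hj hk.2 hk.1.symm
      nlinarith [mul_le_mul_of_nonneg_left this (hw i k)]
    · exact mul_nonneg (mul_nonneg (hw i k) (mdZ_nonneg hw hr hc _ _)) (mdZ_nonneg hw hr hc _ _)
  nlinarith [key]

theorem mdZ_congr {w w' : ι → κ → ℝ} {r r' : ι → ℝ} {c c' : κ → ℝ} (L : List ι) :
    ∀ (C : Finset κ), (∀ i ∈ L, r i = r' i) → (∀ i ∈ L, ∀ j ∈ C, w i j = w' i j) →
    (∀ j ∈ C, c j = c' j) → mdZ w r c L C = mdZ w' r' c' L C := by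
  induction L with
  | nil => intro C _ _ h; exact Finset.prod_congr rfl h
  | cons i L ih =>
    intro C h1 h2 h3
    simp only [mdZ]
    rw [h1 i (by simp), ih C (fun i hi => h1 i (by simp [hi])) (fun i hi => h2 i (by simp [hi])) h3]
    congr 1
    refine Finset.sum_congr rfl fun k hk => ?_
    rw [h2 i (by simp) k hk, ih (C.erase k) (fun i hi => h1 i (by simp [hi]))
      (fun i hi j hj => h2 i (by simp [hi]) j (Finset.mem_of_mem_erase hj))
      (fun j hj => h3 j (Finset.mem_of_mem_erase hj))]

theorem mdZ_row_change {w : ι → κ → ℝ} {r r' : ι → ℝ} {c : κ → ℝ} {L : List ι} (hL : L.Nodup)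
    {i : ι} (hi : i ∈ L) (s : ℝ) (hs : r' i = r i + s) (hr : ∀ i', i' ≠ i → r' i' = r i')
    (C : Finset κ) : mdZ w r' c L C = mdZ w r c L C + s * mdZ w r c (L.erase i) C := by
  have hn : ∀ i' ∈ L.erase i, i' ≠ i := fun i' h e => by
    subst e; exact (hL.not_mem_erase) h
  have e : ∀ C, mdZ w r' c (L.erase i) C = mdZ w r c (L.erase i) C := fun C =>
    mdZ_congr _ _ (fun i' h => hr i' (hn i' h)) (fun _ _ _ _ => rfl) (fun _ _ => rfl)
  rw [mdZ_perm w r' c (List.perm_cons_erase hi), mdZ_perm w r c (List.perm_cons_erase hi)]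
  simp only [mdZ, e, hs]
  ring

theorem mdZ_col_change {w : ι → κ → ℝ} {r : ι → ℝ} {c c' : κ → ℝ} {L : List ι}
    {C : Finset κ} {j : κ} (hj : j ∈ C) (t : ℝ) (ht : c' j = c j + t)
    (hc : ∀ j', j' ≠ j → c' j' = c j') :
    mdZ w r c' L C = mdZ w r c L C + t * mdZ w r c L (C.erase j) := by
  have e : ∀ L, mdZ w r c' L (C.erase j) = mdZ w r c L (C.erase j) := fun L =>
    mdZ_congr _ _ (fun _ _ => rfl) (fun _ _ _ _ => rfl)
      (fun j' h => hc j' (Finset.ne_of_mem_erase h))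
  rw [mdZ_col w r c' L C j hj, mdZ_col w r c L C j hj]
  simp only [e, ht]
  ring

theorem mdZ_w_change {w w' : ι → κ → ℝ} {r : ι → ℝ} {c : κ → ℝ} {L : List ι} (hL : L.Nodup)
    {i : ι} (hi : i ∈ L) {C : Finset κ} {j : κ} (hj : j ∈ C) (a : ℝ) (ha : w' i j = w i j + a)
    (hw : ∀ i' j', (i', j') ≠ (i, j) → w' i' j' = w i' j') :
    mdZ w' r c L C = mdZ w r c L C + a * mdZ w r c (L.erase i) (C.erase j) := by
  have hn : ∀ i' ∈ L.erase i, i' ≠ i := fun i' h e => by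
    subst e; exact (hL.not_mem_erase) h
  have e : ∀ C, mdZ w' r c (L.erase i) C = mdZ w r c (L.erase i) C := fun C =>
    mdZ_congr _ _ (fun _ _ => rfl) (fun i' h j' _ => hw i' j' (by simp [hn i' h])) (fun _ _ => rfl)
  rw [mdZ_perm w' r c (List.perm_cons_erase hi), mdZ_perm w r c (List.perm_cons_erase hi)]
  simp only [mdZ, e]
  rw [← Finset.add_sum_erase C _ hj, ← Finset.add_sum_erase C _ hj, ha,
    Finset.sum_congr rfl fun k hk => by rw [hw i k (by simp [Finset.ne_of_mem_erase hk])]]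
  ring

end MD

/-- The one-edge capacity inequality. -/
theorem edge_capacity {a b c d K α : ℝ} (ha : 0 ≤ a) (hb : 0 ≤ b) (hc : 0 ≤ c) (hd : 0 ≤ d)
    (hdet : b * c ≤ a * d) (hα0 : 0 ≤ α) (hα1 : α ≤ 1)
    (h : ∀ y z : ℝ, 0 < y → 0 < z → K * (y * z) ^ α ≤ a + b * y + c * z + d * (y * z)) :
    K * (α ^ α * (1 - α) ^ (1 - α)) ≤ a + d := by
  rcases hα0.eq_or_lt with rfl | hα0
  · simp only [Real.rpow_zero, sub_zero, Real.rpow_one, mul_one] at h ⊢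
    have : K ≤ a := by
      refine le_of_forall_pos_le_add fun ε hε => ?_
      set δ := min 1 (ε / (b + c + d + 1)) with hδ
      have hs : 0 < b + c + d + 1 := by positivity
      have hδ0 : 0 < δ := by positivity
      have h1 := h δ δ hδ0 hδ0
      have h2 : δ ≤ 1 := min_le_left _ _
      have h3 : δ * (b + c + d + 1) ≤ ε := by
        rw [← le_div_iff₀ hs]; exact min_le_right _ _
      nlinarith [mul_nonneg hd (mul_nonneg hδ0.le (sub_nonneg.2 h2))]
    linarith
  rcases hα1.eq_or_lt with rfl | hα1
  · simp only [Real.rpow_one, sub_self, Real.rpow_zero, mul_one] at h ⊢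
    have : K ≤ d := by
      refine le_of_forall_pos_le_add fun ε hε => ?_
      set δ := min 1 (ε / (a + b + c + 1)) with hδ
      have hs : 0 < a + b + c + 1 := by positivity
      have hδ0 : 0 < δ := by positivity
      have h1 := h δ⁻¹ δ⁻¹ (by positivity) (by positivity)
      have h2 : δ ≤ 1 := min_le_left _ _
      have h3 : δ * (a + b + c + 1) ≤ ε := by
        rw [← le_div_iff₀ hs]; exact min_le_right _ _
      have h4 := mul_le_mul_of_nonneg_right h1 (mul_pos hδ0 hδ0).le
      have h5 : δ⁻¹ * δ = 1 := inv_mul_cancel₀ hδ0.ne'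
      have h6 : K * (δ⁻¹ * δ⁻¹) * (δ * δ) = K := by
        calc _ = K * (δ⁻¹ * δ) * (δ⁻¹ * δ) := by ring
          _ = K := by rw [h5]; ring
      have h7 : (a + b * δ⁻¹ + c * δ⁻¹ + d * (δ⁻¹ * δ⁻¹)) * (δ * δ)
          = a * (δ * δ) + b * δ + c * δ + d := by
        calc _ = a * (δ * δ) + b * δ * (δ⁻¹ * δ) + c * δ * (δ⁻¹ * δ)
              + d * (δ⁻¹ * δ) * (δ⁻¹ * δ) := by ring
          _ = _ := by rw [h5]; ring
      rw [h6, h7] at h4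
      nlinarith [mul_nonneg ha (mul_nonneg hδ0.le (sub_nonneg.2 h2))]
    linarith
  -- interior case
  have hβ : 0 < 1 - α := by linarith
  have main : ∀ a' d' : ℝ, 0 < a' → 0 < d' → a ≤ a' → d ≤ d' → b * c ≤ a' * d' →
      K * (α ^ α * (1 - α) ^ (1 - α)) ≤ a' + d' := by
    intro a' d' ha' hd' haa hdd hdet'
    obtain ⟨b', c', hb', hc', hbb, hcc, hbc⟩ : ∃ b' c' : ℝ, 0 < b' ∧ 0 < c' ∧ b ≤ b' ∧ c ≤ c' ∧
        b' * c' = a' * d' := by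
      rcases hb.eq_or_lt with rfl | hb0
      · exact ⟨a' * d' / (c + 1), c + 1, by positivity, by positivity, by positivity, by linarith,
          by field_simp⟩
      · exact ⟨b, a' * d' / b, hb0, by positivity, le_rfl, by
          rw [le_div_iff₀ hb0]; linarith, by field_simp⟩
    set u := α / (1 - α) with hu
    have hu0 : 0 < u := by positivity
    have h1 := h (u * a' / b') (u * a' / c') (by positivity) (by positivity)
    have e1 : u * a' / b' * (u * a' / c') = (u * u) * (a' / d') := by
      have : c' = a' * d' / b' := by field_simp; linarith
      rw [this]; field_simp
    rw [e1] at h1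
    have h2 : a + b * (u * a' / b') + c * (u * a' / c') + d * (u * u * (a' / d'))
        ≤ a' * (1 + u) ^ 2 := by
      have t1 : b * (u * a' / b') ≤ u * a' := by
        rw [mul_div_assoc', div_le_iff₀ hb']; nlinarith [mul_pos hu0 ha']
      have t2 : c * (u * a' / c') ≤ u * a' := by
        rw [mul_div_assoc', div_le_iff₀ hc']; nlinarith [mul_pos hu0 ha']
      have t3 : d * (u * u * (a' / d')) ≤ u * u * a' := by
        have : d * (u * u * (a' / d')) = (u * u * a') * d / d' := by field_simp
        rw [this, div_le_iff₀ hd']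
        exact mul_le_mul_of_nonneg_left hdd (by positivity)
      nlinarith
    have h3 : 1 + u = (1 - α)⁻¹ := by rw [hu]; field_simp; ring
    rw [h3] at h2
    have amgm := Real.geom_mean_le_arith_mean2_weighted hβ.le hα0.le
      (p₁ := a' / (1 - α)) (p₂ := d' / α) (by positivity) (by positivity) (by ring)
    have e2 : (1 - α) * (a' / (1 - α)) + α * (d' / α) = a' + d' := by field_simp
    rw [e2] at amgm
    refine le_trans ?_ amgm
    have h4 : K * ((u * u) * (a' / d')) ^ α ≤ a' * ((1 - α)⁻¹) ^ 2 := h1.trans h2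
    rw [← le_div_iff₀ (by positivity)] at h4
    refine (mul_le_mul_of_nonneg_right h4 (by positivity)).trans (le_of_eq ?_)
    rw [hu, Real.mul_rpow (by positivity) (by positivity), Real.mul_rpow (by positivity) (by positivity),
      Real.div_rpow hα0.le hβ.le, Real.div_rpow ha'.le hd'.le, Real.div_rpow ha'.le hβ.le,
      Real.div_rpow hd'.le hα0.le, Real.rpow_sub ha', Real.rpow_sub hβ]
    simp only [Real.rpow_one]
    have p1 : 0 < α ^ α := by positivity
    have p2 : 0 < (1 - α) ^ α := by positivity
    have p3 : 0 < a' ^ α := by positivity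
    have p4 : 0 < d' ^ α := by positivity
    field_simp
  refine le_of_forall_pos_le_add fun ε hε => ?_
  have := main (a + ε / 2) (d + ε / 2) (by positivity) (by positivity) (by linarith) (by linarith)
    (by nlinarith)
  linarith


theorem mdZ_le_sum {ι : Type*} [DecidableEq ι] [Fintype ι] (a : ι → ι → ℝ)
    (ha : ∀ i j, 0 ≤ a i j) (L : List ι) (hL : L.Nodup) :
    ∀ g : ι → ι, mdZ a (fun _ => 0) (fun _ => 0) L
      (Finset.univ \ (Finset.univ.filter (· ∉ L)).image g) ≤
      ∑ σ : Equiv.Perm ι with (∀ i, i ∉ L → σ i = g i), (L.map fun i => a i (σ i)).prod := by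
  induction L with
  | nil =>
    intro g
    simp only [mdZ, List.not_mem_nil, not_false_eq_true, Finset.filter_true, List.map_nil,
      List.prod_nil, forall_const]
    by_cases hg : Function.Surjective g
    · have hb : Function.Bijective g := Finite.surjective_iff_bijective.1 hg
      have h1 : (Finset.univ \ Finset.univ.image g : Finset ι) = ∅ := by
        rw [Finset.image_univ_of_surjective hg]; simp
      rw [h1, Finset.prod_empty]
      refine Finset.single_le_sum (f := fun _ => (1 : ℝ)) (fun _ _ => zero_le_one)
        (a := Equiv.ofBijective g hb) ?_
      simp
    · obtain ⟨j, hj⟩ := not_forall.1 hg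
      rw [Finset.prod_eq_zero (i := j) _ rfl]
      · exact Finset.sum_nonneg fun _ _ => zero_le_one
      · simpa using hj
  | cons i L ih =>
    intro g
    have hi : i ∉ L := (List.nodup_cons.1 hL).1
    have hL' := (List.nodup_cons.1 hL).2
    set C := (Finset.univ \ (Finset.univ.filter (· ∉ i :: L)).image g) with hC
    simp only [mdZ, zero_mul, zero_add]
    have hCe : ∀ k ∈ C, C.erase k = Finset.univ \
        (Finset.univ.filter (· ∉ L)).image (Function.update g i k) := by
      intro k _
      ext j
      simp only [hC, Finset.mem_erase, Finset.mem_sdiff, Finset.mem_univ, true_and,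
        Finset.mem_image, Finset.mem_filter, List.mem_cons, not_or, not_exists, not_and]
      constructor
      · rintro ⟨hjk, h⟩ x hx
        by_cases hxi : x = i
        · subst hxi; simpa using fun h => hjk h.symm
        · rw [Function.update_of_ne hxi]; exact h x ⟨hxi, hx⟩
      · intro h
        refine ⟨fun hjk => ?_, fun x hx => ?_⟩
        · exact h i hi (by simp [hjk])
        · have := h x hx.2
          rwa [Function.update_of_ne hx.1] at this
    calc ∑ k ∈ C, a i k * mdZ a (fun _ => 0) (fun _ => 0) L (C.erase k)
        ≤ ∑ k ∈ C, ∑ σ : Equiv.Perm ι with (∀ x, x ∉ L → σ x = Function.update g i k x),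
            ((i :: L).map fun i => a i (σ i)).prod := by
          refine Finset.sum_le_sum fun k hk => ?_
          rw [hCe k hk]
          refine (mul_le_mul_of_nonneg_left (ih hL' _) (ha i k)).trans (le_of_eq ?_)
          rw [Finset.mul_sum]
          refine Finset.sum_congr rfl fun σ hσ => ?_
          have := (Finset.mem_filter.1 hσ).2 i hi
          rw [Function.update_self] at this
          simp [this]
      _ ≤ ∑ k, ∑ σ : Equiv.Perm ι with (∀ x, x ∉ L → σ x = Function.update g i k x),
            ((i :: L).map fun i => a i (σ i)).prod := by
          refine Finset.sum_le_sum_of_subset_of_nonneg (Finset.subset_univ _) fun k _ _ => ?_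
          refine Finset.sum_nonneg fun σ _ => List.prod_nonneg ?_
          intro x hx
          obtain ⟨y, _, rfl⟩ := List.mem_map.1 hx
          exact ha _ _
      _ = _ := by
          rw [← Finset.sum_fiberwise _ (fun σ : Equiv.Perm ι => σ i)]
          refine Finset.sum_congr rfl fun k _ => Finset.sum_congr ?_ fun _ _ => rfl
          ext σ
          simp only [Finset.mem_filter, Finset.mem_univ, true_and, List.mem_cons, not_or]
          constructor
          · intro h
            refine ⟨fun x hx => ?_, ?_⟩
            · rw [h x hx.2, Function.update_of_ne hx.1]
            · rw [h i hi, Function.update_self]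
          · rintro ⟨h1, h2⟩ x hx
            by_cases hxi : x = i
            · subst hxi; simpa using h2
            · rw [Function.update_of_ne hxi, h1 x ⟨hxi, hx⟩]

theorem mdZ_le_perm {ι : Type*} [DecidableEq ι] [Fintype ι] (a : ι → ι → ℝ)
    (ha : ∀ i j, 0 ≤ a i j) :
    mdZ a (fun _ => 0) (fun _ => 0) Finset.univ.toList Finset.univ ≤
      ∑ σ : Equiv.Perm ι, ∏ i, a i (σ i) := by
  have := mdZ_le_sum a ha Finset.univ.toList (Finset.nodup_toList _) id
  simpa using this

theorem mdZ_zero {ι κ : Type*} [DecidableEq κ] (r : ι → ℝ) (c : κ → ℝ)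
    (L : List ι) (C : Finset κ) :
    mdZ (fun _ _ => 0) r c L C = (L.map r).prod * ∏ j ∈ C, c j := by
  induction L with
  | nil => simp [mdZ]
  | cons i L ih => simp [mdZ, ih, mul_assoc]

section Schr
variable {ι : Type*} [DecidableEq ι] [Fintype ι]

/-- contracted weights -/
def ctW (a : ι → ι → ℝ) (X : Finset (ι × ι)) (i j : ι) : ℝ := if (i, j) ∈ X then a i j else 0
/-- row activities -/
def ctR (a : ι → ι → ℝ) (X : Finset (ι × ι)) (y : ι × ι → ℝ) (i : ι) : ℝ :=
  ∑ j, if (i, j) ∈ X then 0 else a i j * y (i, j)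
/-- column activities -/
def ctC (X : Finset (ι × ι)) (z : ι × ι → ℝ) (j : ι) : ℝ :=
  ∑ i, if (i, j) ∈ X then 0 else z (i, j)

theorem schrijver_induct (x g : ι → ι → ℝ) (hx0 : ∀ i j, 0 ≤ x i j) (hg : ∀ i j, 0 ≤ g i j)
    (hrow : ∀ i, ∑ j, x i j = 1) (hcol : ∀ j, ∑ i, x i j = 1) (X : Finset (ι × ι)) :
    ∀ y z : ι × ι → ℝ, (∀ e, 0 < y e) → (∀ e, 0 < z e) →
    (∏ e ∈ X, (x e.1 e.2 ^ x e.1 e.2 * (1 - x e.1 e.2) ^ (1 - x e.1 e.2))) *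
      (∏ e : ι × ι, g e.1 e.2 ^ x e.1 e.2 / x e.1 e.2 ^ x e.1 e.2) *
      (∏ e ∈ Xᶜ, (y e * z e) ^ x e.1 e.2) ≤
    mdZ (ctW (fun i j => x i j * g i j) X) (ctR (fun i j => x i j * g i j) X y) (ctC X z)
      Finset.univ.toList Finset.univ := by
  have hx1 : ∀ i j, x i j ≤ 1 := fun i j => by
    rw [← hrow i]; exact Finset.single_le_sum (fun j _ => hx0 i j) (Finset.mem_univ j)
  induction X using Finset.induction_on with
  | empty =>
    intro y z hy hz
    have hW : ctW (fun i j => x i j * g i j) ∅ = fun _ _ => 0 := by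
      ext i j; simp [ctW]
    rw [hW, mdZ_zero, Finset.prod_map_toList]
    have h1 : ∀ i, ∏ j, (g i j * y (i, j)) ^ x i j ≤ ctR (fun i j => x i j * g i j) ∅ y i := by
      intro i
      refine (Real.geom_mean_le_arith_mean_weighted Finset.univ (x i) (fun j => g i j * y (i, j))
        (fun j _ => hx0 i j) (hrow i) (fun j _ => mul_nonneg (hg i j) (hy _).le)).trans
        (le_of_eq ?_)
      simp [ctR, mul_assoc]
    have h2 : ∀ j, ∏ i, (z (i, j) / x i j) ^ x i j ≤ ctC ∅ z j := by
      intro j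
      refine (Real.geom_mean_le_arith_mean_weighted Finset.univ (fun i => x i j)
        (fun i => z (i, j) / x i j)
        (fun i _ => hx0 i j) (hcol j) (fun i _ => div_nonneg (hz _).le (hx0 i j))).trans ?_
      simp only [ctC, Finset.notMem_empty, if_false]
      refine Finset.sum_le_sum fun i _ => ?_
      by_cases h : x i j = 0
      · simp [h, (hz _).le]
      · rw [mul_div_cancel₀ _ h]
    have h3 := mul_le_mul (Finset.prod_le_prod (s := Finset.univ)
        (fun i _ => Finset.prod_nonneg fun j _ => Real.rpow_nonneg (mul_nonneg (hg i j) (hy _).le) _)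
        (fun i _ => h1 i))
      (Finset.prod_le_prod (s := Finset.univ)
        (fun j _ => Finset.prod_nonneg fun i _ => Real.rpow_nonneg (div_nonneg (hz _).le (hx0 i j)) _)
        (fun j _ => h2 j))
      (Finset.prod_nonneg fun j _ => Finset.prod_nonneg fun i _ =>
        Real.rpow_nonneg (div_nonneg (hz _).le (hx0 i j)) _)
      (Finset.prod_nonneg fun i _ => (Finset.prod_nonneg fun j _ =>
        Real.rpow_nonneg (mul_nonneg (hg i j) (hy _).le) _).trans (h1 i))
    refine le_trans (le_of_eq ?_) h3
    rw [Finset.prod_comm (f := fun j i => (z (i, j) / x i j) ^ x i j)]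
    rw [← Fintype.prod_prod_type' (f := fun i j => (g i j * y (i, j)) ^ x i j),
      ← Fintype.prod_prod_type' (f := fun i j => (z (i, j) / x i j) ^ x i j),
      Finset.prod_empty, one_mul, Finset.compl_empty, ← Finset.prod_mul_distrib,
      ← Finset.prod_mul_distrib]
    refine Finset.prod_congr rfl fun e _ => ?_
    rw [Real.mul_rpow (hy _).le (hz _).le, Real.mul_rpow (hg _ _) (hy _).le,
      Real.div_rpow (hz _).le (hx0 _ _)]
    ring
  | insert e X he ih =>
    intro y z hy hz
    obtain ⟨i, j⟩ := e
    set a : ι → ι → ℝ := fun i j => x i j * g i j with ha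
    have ha0 : ∀ i j, 0 ≤ a i j := fun i j => mul_nonneg (hx0 i j) (hg i j)
    set L : List ι := Finset.univ.toList with hLdef
    have hL : L.Nodup := Finset.nodup_toList _
    have hiL : i ∈ L := by simp [hLdef]
    set w := ctW a X with hw
    set r := ctR a (insert (i, j) X) y with hr
    set c := ctC (insert (i, j) X) z with hc
    have hw0 : ∀ i j, 0 ≤ w i j := fun i j => by
      simp only [hw, ctW]; split_ifs; exacts [ha0 i j, le_rfl]
    have hr0 : ∀ i, 0 ≤ r i := fun i => Finset.sum_nonneg fun j _ => by
      split_ifs; exacts [le_rfl, mul_nonneg (ha0 i j) (hy _).le]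
    have hc0 : ∀ i, 0 ≤ c i := fun i => Finset.sum_nonneg fun j _ => by
      split_ifs; exacts [le_rfl, (hz _).le]
    have hW : mdZ (ctW a (insert (i, j) X)) r c L Finset.univ = mdZ w r c L Finset.univ +
        a i j * mdZ w r c (L.erase i) (Finset.univ.erase j) := by
      refine mdZ_w_change hL hiL (Finset.mem_univ j) _ ?_ ?_
      · simp [hw, ctW, he]
      · intro i' j' h
        simp [hw, ctW, Finset.mem_insert, h]
    rw [hW]
    have hXc : (Xᶜ : Finset (ι × ι)) = insert (i, j) (insert (i, j) X)ᶜ := by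
      rw [Finset.compl_insert, Finset.insert_erase (by simpa using he)]
    have hni : (i, j) ∉ (insert (i, j) X)ᶜ := by simp
    rw [Finset.prod_insert he]
    set A := ∏ e ∈ X, (x e.1 e.2 ^ x e.1 e.2 * (1 - x e.1 e.2) ^ (1 - x e.1 e.2)) with hA
    set B := (∏ e : ι × ι, g e.1 e.2 ^ x e.1 e.2 / x e.1 e.2 ^ x e.1 e.2) with hB
    set D := ∏ e ∈ (insert (i, j) X)ᶜ, (y e * z e) ^ x e.1 e.2 with hD
    have key := edge_capacity (a := mdZ w r c L Finset.univ)
      (b := a i j * mdZ w r c (L.erase i) Finset.univ)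
      (c := mdZ w r c L (Finset.univ.erase j))
      (d := a i j * mdZ w r c (L.erase i) (Finset.univ.erase j)) (K := A * B * D) (α := x i j)
      (mdZ_nonneg hw0 hr0 hc0 _ _) (mul_nonneg (ha0 _ _) (mdZ_nonneg hw0 hr0 hc0 _ _))
      (mdZ_nonneg hw0 hr0 hc0 _ _) (mul_nonneg (ha0 _ _) (mdZ_nonneg hw0 hr0 hc0 _ _))
      (by
        have h := (mdZ_ineq hw0 hr0 hc0 _ (L.erase i) rfl).2 i Finset.univ j (Finset.mem_univ j)
        rw [← mdZ_perm w r c (List.perm_cons_erase hiL),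
          ← mdZ_perm w r c (List.perm_cons_erase hiL)] at h
        nlinarith [mul_le_mul_of_nonneg_left h (ha0 i j)])
      (hx0 i j) (hx1 i j)
      (by
        intro s t hs ht
        have h := ih (Function.update y (i, j) s) (Function.update z (i, j) t)
          (fun e => by
            by_cases h : e = (i, j)
            · subst h; simpa using hs
            · rw [Function.update_of_ne h]; exact hy e)
          (fun e => by
            by_cases h : e = (i, j)
            · subst h; simpa using ht
            · rw [Function.update_of_ne h]; exact hz e)
        rw [hXc, Finset.prod_insert hni] at h
        have hD' : ∏ e ∈ (insert (i, j) X)ᶜ, (Function.update y (i, j) s e *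
            Function.update z (i, j) t e) ^ x e.1 e.2 = D := by
          refine Finset.prod_congr rfl fun e he' => ?_
          have : e ≠ (i, j) := fun h => hni (h ▸ he')
          rw [Function.update_of_ne this, Function.update_of_ne this]
        rw [hD'] at h
        simp only [Function.update_self] at h
        have hR1 : ctR a X (Function.update y (i, j) s) i = r i + a i j * s := by
          simp only [hr, ctR]
          rw [← Finset.add_sum_erase _ _ (Finset.mem_univ j),
            ← Finset.add_sum_erase (a := j) _ (fun k => if (i, k) ∈ insert (i, j) X then (0 : ℝ)
              else a i k * y (i, k)) (Finset.mem_univ j)]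
          simp only [he, if_false, Function.update_self, Finset.mem_insert_self, if_true]
          rw [zero_add, add_comm]
          congr 1
          refine Finset.sum_congr rfl fun k hk => ?_
          have : (i, k) ≠ (i, j) := by simpa using hk
          simp [Finset.mem_insert, this]
        have hR2 : ∀ i', i' ≠ i → ctR a X (Function.update y (i, j) s) i' = r i' := by
          intro i' hi'
          refine Finset.sum_congr rfl fun k _ => ?_
          have : (i', k) ≠ (i, j) := by simp [hi']
          simp [Finset.mem_insert, this]
        have hC1 : ctC X (Function.update z (i, j) t) j = c j + t := by
          simp only [hc, ctC]
          rw [← Finset.add_sum_erase _ _ (Finset.mem_univ i),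
            ← Finset.add_sum_erase (a := i) _ (fun k => if (k, j) ∈ insert (i, j) X then (0 : ℝ)
              else z (k, j)) (Finset.mem_univ i)]
          simp only [he, if_false, Function.update_self, Finset.mem_insert_self, if_true]
          rw [zero_add, add_comm]
          congr 1
          refine Finset.sum_congr rfl fun k hk => ?_
          have : (k, j) ≠ (i, j) := by simpa using hk
          simp [Finset.mem_insert, this]
        have hC2 : ∀ j', j' ≠ j → ctC X (Function.update z (i, j) t) j' = c j' := by
          intro j' hj'
          refine Finset.sum_congr rfl fun k _ => ?_
          have : (k, j') ≠ (i, j) := by simp [hj']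
          simp [Finset.mem_insert, this]
        rw [mdZ_col_change (c := c) (Finset.mem_univ j) t hC1 hC2,
          mdZ_row_change (r := r) hL hiL (a i j * s) hR1 hR2 Finset.univ,
          mdZ_row_change (r := r) hL hiL (a i j * s) hR1 hR2 (Finset.univ.erase j)] at h
        refine le_trans (le_of_eq ?_) (h.trans (le_of_eq ?_)) <;> ring)
    refine le_trans (le_of_eq ?_) key
    ring

theorem schrijver (x g : ι → ι → ℝ) (hx0 : ∀ i j, 0 ≤ x i j)
    (hrow : ∀ i, ∑ j, x i j = 1) (hcol : ∀ j, ∑ i, x i j = 1)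
    (hg : ∀ i j, g i j = if x i j = 1 then 1 else 1 - x i j) :
    ∏ i, ∏ j, g i j ≤ ∑ σ : Equiv.Perm ι, ∏ i, (x i (σ i) * g i (σ i)) := by
  have hx1 : ∀ i j, x i j ≤ 1 := fun i j => by
    rw [← hrow i]; exact Finset.single_le_sum (fun j _ => hx0 i j) (Finset.mem_univ j)
  have hg0 : ∀ i j, 0 ≤ g i j := fun i j => by
    rw [hg]; split_ifs; exacts [zero_le_one, sub_nonneg.2 (hx1 i j)]
  have h := schrijver_induct x g hx0 hg0 hrow hcol Finset.univ (fun _ => 1) (fun _ => 1)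
    (fun _ => one_pos) (fun _ => one_pos)
  have h2 := mdZ_le_perm (fun i j => x i j * g i j) (fun i j => mul_nonneg (hx0 i j) (hg0 i j))
  have e1 : ctW (fun i j => x i j * g i j) Finset.univ = fun i j => x i j * g i j := by
    ext i j; simp [ctW]
  have e2 : ctR (fun i j => x i j * g i j) Finset.univ (fun _ => 1) = fun _ => 0 := by
    ext i; simp [ctR]
  have e3 : ctC (ι := ι) Finset.univ (fun _ => 1) = fun _ => 0 := by
    ext i; simp [ctC]
  rw [e1, e2, e3] at h
  refine le_trans (le_of_eq ?_) (h.trans h2)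
  rw [Finset.compl_univ, Finset.prod_empty, mul_one, ← Finset.prod_mul_distrib,
    ← Fintype.prod_prod_type' (f := fun i j => g i j)]
  refine Finset.prod_congr rfl fun e _ => ?_
  have hne : x e.1 e.2 ^ x e.1 e.2 ≠ 0 := by
    rcases (hx0 e.1 e.2).eq_or_lt with h | h
    · rw [← h]; simp
    · exact (Real.rpow_pos_of_pos h _).ne'
  by_cases h1 : x e.1 e.2 = 1
  · simp [hg, h1]
  · have hp : 0 < 1 - x e.1 e.2 := sub_pos.2 (lt_of_le_of_ne (hx1 _ _) h1)
    have : (1 - x e.1 e.2) ^ (1 - x e.1 e.2) * (1 - x e.1 e.2) ^ x e.1 e.2 = 1 - x e.1 e.2 := by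
      rw [← Real.rpow_add hp]; simp
    rw [hg, if_neg h1]
    field_simp
    linarith
end Schr


/-- nonnegative integer matrices with all row and column sums `M` -/
def gam (m M : ℕ) : Finset (Fin m → Fin m → ℕ) :=
  (Fintype.piFinset fun _ => Fintype.piFinset fun _ => Finset.range (M + 1)).filter
    fun γ => (∀ i, ∑ j, γ i j = M) ∧ ∀ j, ∑ i, γ i j = M

theorem mem_gam {m M : ℕ} {γ : Fin m → Fin m → ℕ} :
    γ ∈ gam m M ↔ (∀ i, ∑ j, γ i j = M) ∧ ∀ j, ∑ i, γ i j = M := by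
  simp only [gam, Finset.mem_filter, Fintype.mem_piFinset, Finset.mem_range, and_iff_right_iff_imp]
  rintro ⟨h, -⟩ i j
  rw [← h i, Nat.lt_succ_iff]
  exact Finset.single_le_sum (f := γ i) (fun _ _ => Nat.zero_le _) (Finset.mem_univ j)

/-- the per-cell factor -/
noncomputable def phi (M k : ℕ) : ℝ := ((M - k).factorial : ℝ) / (k.factorial * M.factorial)

/-- the Bethe coefficient -/
noncomputable def coefB (m M : ℕ) (γ : Fin m → Fin m → ℕ) : ℝ :=
  ((M.factorial : ℝ) ^ 2) ^ m * ∏ i, ∏ j, phi M (γ i j)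

/-- the Bethe sum -/
noncomputable def sumB {m : ℕ} (M : ℕ) (θ : Matrix (Fin m) (Fin m) ℝ) : ℝ :=
  ∑ γ ∈ gam m M, (∏ i, ∏ j, θ i j ^ γ i j) * coefB m M γ

theorem phi_pos (M k : ℕ) : 0 < phi M k := by
  unfold phi; positivity

theorem coefB_pos (m M : ℕ) (γ : Fin m → Fin m → ℕ) : 0 < coefB m M γ := by
  unfold coefB
  exact mul_pos (by positivity) (Finset.prod_pos fun _ _ => Finset.prod_pos fun _ _ => phi_pos _ _)

theorem phi_off (M k : ℕ) (hk : k ≤ M) :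
    phi M k * (1 - (k : ℝ) / ((M + 1 : ℕ) : ℝ)) = phi (M + 1) k := by
  obtain ⟨d, rfl⟩ := Nat.exists_eq_add_of_le hk
  have e1 : k + d - k = d := by omega
  have e2 : k + d + 1 - k = d + 1 := by omega
  simp only [phi, e1, e2, Nat.factorial_succ]
  push_cast
  have := Nat.factorial_pos k
  have := Nat.factorial_pos (k + d)
  field_simp
  ring

theorem phi_on (M k : ℕ) (hk : k + 1 ≤ M + 1) :
    phi M k = phi (M + 1) (k + 1) * (((k + 1 : ℕ) : ℝ) / ((M + 1 : ℕ) : ℝ) * ((M + 1 : ℕ) : ℝ) ^ 2) := by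
  have e2 : M + 1 - (k + 1) = M - k := by omega
  simp only [phi, e2, Nat.factorial_succ]
  push_cast
  have := Nat.factorial_pos k
  have := Nat.factorial_pos M
  field_simp

/-- subtract a permutation matrix -/
def subP {m : ℕ} (γ : Fin m → Fin m → ℕ) (σ : Equiv.Perm (Fin m)) : Fin m → Fin m → ℕ :=
  fun i j => γ i j - if σ i = j then 1 else 0

theorem coef_step (m M : ℕ) (γ : Fin m → Fin m → ℕ) (hγ : γ ∈ gam m (M + 1)) :
    coefB m (M + 1) γ ≤ ∑ σ : Equiv.Perm (Fin m) with (∀ i, 1 ≤ γ i (σ i)),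
      coefB m M (subP γ σ) := by
  obtain ⟨hrow, hcol⟩ := mem_gam.1 hγ
  have hM : ((M + 1 : ℕ) : ℝ) ≠ 0 := by positivity
  set x : Fin m → Fin m → ℝ := fun i j => (γ i j : ℝ) / ((M + 1 : ℕ) : ℝ) with hx
  set g : Fin m → Fin m → ℝ := fun i j => if x i j = 1 then 1 else 1 - x i j with hg
  have hle : ∀ i j, γ i j ≤ M + 1 := fun i j => by
    rw [← hrow i]
    exact Finset.single_le_sum (f := γ i) (fun _ _ => Nat.zero_le _) (Finset.mem_univ j)
  have hx1 : ∀ i j, x i j = 1 ↔ γ i j = M + 1 := fun i j => by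
    simp only [hx]; rw [div_eq_one_iff_eq hM]; exact Nat.cast_inj
  have hg0 : ∀ i j, 0 < g i j := fun i j => by
    simp only [hg]
    split_ifs with h
    · exact one_pos
    · rw [hx1] at h
      have : γ i j < M + 1 := lt_of_le_of_ne (hle i j) h
      rw [sub_pos, div_lt_one (by positivity)]
      exact_mod_cast this
  have S := schrijver x g (fun i j => by positivity)
    (fun i => by simp only [hx]; rw [← Finset.sum_div, ← Nat.cast_sum, hrow, div_self hM])
    (fun j => by simp only [hx]; rw [← Finset.sum_div, ← Nat.cast_sum, hcol, div_self hM])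
    (fun _ _ => rfl)
  have hG : 0 < ∏ i, ∏ j, g i j := Finset.prod_pos fun _ _ => Finset.prod_pos fun _ _ => hg0 _ _
  refine le_of_mul_le_mul_right ?_ hG
  refine (mul_le_mul_of_nonneg_left S (coefB_pos _ _ _).le).trans (le_of_eq ?_)
  rw [Finset.sum_mul, Finset.mul_sum]
  symm
  rw [Finset.sum_filter]
  refine Finset.sum_congr rfl fun σ _ => ?_
  split_ifs with h
  · have cell : ∀ i j, phi M (subP γ σ i j) * g i j = phi (M + 1) (γ i j) *
        (if σ i = j then x i j * g i j * ((M + 1 : ℕ) : ℝ) ^ 2 else 1) := by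
      intro i j
      by_cases hj : σ i = j
      · subst hj
        obtain ⟨k, hk⟩ := Nat.exists_eq_add_of_le' (h i)
        have hk2 := hle i (σ i)
        rw [hk] at hk2
        simp only [subP, if_true, hx, hk, Nat.add_sub_cancel]
        rw [phi_on M k hk2]
        ring
      · have hlt : γ i j ≤ M := by
          have h1 : γ i (σ i) + γ i j ≤ M + 1 := by
            rw [← hrow i, ← Finset.sum_pair hj]
            exact Finset.sum_le_sum_of_subset (Finset.subset_univ _)
          have := h i
          omega
        have hn : x i j ≠ 1 := by rw [Ne, hx1]; omega
        simp only [subP, hj, if_false, Nat.sub_zero, mul_one, hg, hn]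
        exact phi_off M _ hlt
    unfold coefB
    rw [mul_assoc, ← Finset.prod_mul_distrib]
    have : ∀ i, (∏ j, phi M (subP γ σ i j)) * ∏ j, g i j =
        (∏ j, phi (M + 1) (γ i j)) * (x i (σ i) * g i (σ i) * ((M + 1 : ℕ) : ℝ) ^ 2) := by
      intro i
      rw [← Finset.prod_mul_distrib, Finset.prod_congr rfl fun j _ => cell i j,
        Finset.prod_mul_distrib, Finset.prod_ite_eq]
      simp
    rw [Finset.prod_congr rfl fun i _ => this i, Finset.prod_mul_distrib, Finset.prod_mul_distrib,
      Finset.prod_const, Nat.factorial_succ, Nat.cast_mul, mul_pow, mul_pow]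
    simp only [Finset.card_univ, Fintype.card_fin]
    ring
  · push Not at h
    obtain ⟨i, hi⟩ := h
    have h0 : γ i (σ i) = 0 := by omega
    rw [Finset.prod_eq_zero (Finset.mem_univ i) (by simp [hx, h0])]
    simp

theorem sumB_step {m : ℕ} (M : ℕ) (θ : Matrix (Fin m) (Fin m) ℝ) (hθ : ∀ i j, 0 ≤ θ i j) :
    sumB (M + 1) θ ≤ (∑ σ : Equiv.Perm (Fin m), ∏ i, θ i (σ i)) * sumB M θ := by
  have hP : ∀ γ : Fin m → Fin m → ℕ, 0 ≤ ∏ i, ∏ j, θ i j ^ γ i j := fun γ =>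
    Finset.prod_nonneg fun i _ => Finset.prod_nonneg fun j _ => pow_nonneg (hθ i j) _
  have eqP : ∀ (γ : Fin m → Fin m → ℕ) (σ : Equiv.Perm (Fin m)), (∀ i, 1 ≤ γ i (σ i)) →
      ∀ i j, γ i j = subP γ σ i j + if σ i = j then 1 else 0 := by
    intro γ σ h i j
    simp only [subP]
    split_ifs with hj
    · subst hj; have := h i; omega
    · omega
  calc sumB (M + 1) θ ≤ ∑ γ ∈ gam m (M + 1), (∏ i, ∏ j, θ i j ^ γ i j) *
        ∑ σ : Equiv.Perm (Fin m) with (∀ i, 1 ≤ γ i (σ i)), coefB m M (subP γ σ) :=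
        Finset.sum_le_sum fun γ hγ => mul_le_mul_of_nonneg_left (coef_step m M γ hγ) (hP γ)
    _ = ∑ σ : Equiv.Perm (Fin m), ∑ γ ∈ gam m (M + 1) with (∀ i, 1 ≤ γ i (σ i)),
        (∏ i, θ i (σ i)) * ((∏ i, ∏ j, θ i j ^ subP γ σ i j) * coefB m M (subP γ σ)) := by
        simp only [Finset.mul_sum, Finset.sum_filter]
        rw [Finset.sum_comm]
        refine Finset.sum_congr rfl fun σ _ => Finset.sum_congr rfl fun γ _ => ?_
        split_ifs with h
        · rw [← mul_assoc, ← Finset.prod_mul_distrib]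
          congr 1
          refine Finset.prod_congr rfl fun i _ => ?_
          rw [Finset.prod_congr rfl fun j _ => by rw [eqP γ σ h i j, pow_add],
            Finset.prod_mul_distrib, mul_comm]
          congr 1
          rw [Finset.prod_congr rfl fun j _ => show θ i j ^ (if σ i = j then 1 else 0)
            = if σ i = j then θ i j else 1 by split_ifs <;> simp]
          simp
        · rw [mul_zero]
    _ ≤ ∑ σ : Equiv.Perm (Fin m), (∏ i, θ i (σ i)) * sumB M θ := by
        refine Finset.sum_le_sum fun σ _ => ?_
        rw [← Finset.mul_sum]
        refine mul_le_mul_of_nonneg_left ?_ (Finset.prod_nonneg fun i _ => hθ _ _)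
        rw [← Finset.sum_image (g := fun γ => subP γ σ)
          (f := fun γ => (∏ i, ∏ j, θ i j ^ γ i j) * coefB m M γ)]
        · refine Finset.sum_le_sum_of_subset_of_nonneg ?_ fun γ _ _ =>
            mul_nonneg (hP γ) (coefB_pos _ _ _).le
          intro γ' h'
          obtain ⟨γ, h, rfl⟩ := Finset.mem_image.1 h'
          obtain ⟨hγ, h1⟩ := Finset.mem_filter.1 h
          obtain ⟨hr, hc⟩ := mem_gam.1 hγ
          rw [mem_gam]
          constructor
          · intro i
            have := hr i
            rw [Finset.sum_congr rfl fun j _ => eqP γ σ h1 i j, Finset.sum_add_distrib] at this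
            simpa using this
          · intro j
            have := hc j
            rw [Finset.sum_congr rfl fun i _ => eqP γ σ h1 i j, Finset.sum_add_distrib] at this
            have e : ∑ i, (if σ i = j then 1 else 0) = 1 := by
              rw [Equiv.sum_comp σ (fun k => if k = j then 1 else 0)]
              simp
            rw [e] at this
            omega
        · intro γ1 h1 γ2 h2 he
          have h1 := (Finset.mem_filter.1 h1).2
          have h2 := (Finset.mem_filter.1 h2).2
          ext i j
          rw [eqP γ1 σ h1 i j, eqP γ2 σ h2 i j]
          have : subP γ1 σ i j = subP γ2 σ i j := congrFun (congrFun he i) j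
          rw [this]
    _ = _ := by rw [Finset.sum_mul]

theorem sumB_le {m : ℕ} (M : ℕ) (θ : Matrix (Fin m) (Fin m) ℝ) (hθ : ∀ i j, 0 ≤ θ i j) :
    sumB M θ ≤ θ.permanent ^ M := by
  have hperm : θ.permanent = ∑ σ : Equiv.Perm (Fin m), ∏ i, θ i (σ i) := by
    rw [← Matrix.permanent_transpose]; rfl
  rw [hperm]
  induction M with
  | zero =>
    have : gam m 0 = {fun _ _ => 0} := by
      ext γ
      rw [mem_gam, Finset.mem_singleton]
      constructor
      · rintro ⟨h, -⟩
        ext i j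
        exact (Finset.sum_eq_zero_iff.1 (h i)) j (Finset.mem_univ j)
      · rintro rfl; simp
    simp [sumB, this, coefB, phi]
  | succ M ih =>
    rw [pow_succ']
    exact (sumB_step M θ hθ).trans (mul_le_mul_of_nonneg_left ih
      (Finset.sum_nonneg fun σ _ => Finset.prod_nonneg fun i _ => hθ _ _))


section Count
variable {α ι : Type*} [Fintype α] [DecidableEq α] [Fintype ι] [DecidableEq ι]

theorem card_perm_comp (f f' : α → ι)
    (h : ∀ i, Fintype.card {a // f a = i} = Fintype.card {a // f' a = i}) :
    (Finset.univ.filter fun g : Equiv.Perm α => f' ∘ g = f).card =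
      ∏ i, (Fintype.card {a // f a = i}).factorial := by
  rw [← DomMulAct.stabilizer_card f, ← Fintype.card_subtype]
  let e : α ≃ α := Equiv.ofFiberEquiv (f := f) (g := f') fun i => Fintype.equivOfCardEq (h i)
  have he : ∀ a, f' (e a) = f a := fun a => Equiv.ofFiberEquiv_map _ a
  refine Fintype.card_congr ((Equiv.mulLeft (e⁻¹ : Equiv.Perm α)).subtypeEquiv fun g => ?_)
  have he' : ∀ a, f (e⁻¹ a) = f' a := fun a => by
    rw [← he]; exact congrArg f' (e.apply_symm_apply a)
  constructor
  · intro hg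
    ext a
    exact (he' (g a)).trans (congrFun hg a)
  · intro hg
    ext a
    exact (he' (g a)).symm.trans (congrFun hg a)

theorem card_words (γ : ι → ℕ) :
    (Finset.univ.filter fun f : α → ι => ∀ i, Fintype.card {a // f a = i} = γ i).card
      * ∏ i, (γ i).factorial ≤ (Fintype.card α).factorial := by
  set W := (Finset.univ.filter fun f : α → ι => ∀ i, Fintype.card {a // f a = i} = γ i) with hW
  rcases W.eq_empty_or_nonempty with h | ⟨f0, h0⟩
  · simp [h]
  have hc : ∀ f ∈ W, ∀ i, Fintype.card {a // f a = i} = γ i := fun f hf =>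
    (Finset.mem_filter.1 hf).2
  calc W.card * ∏ i, (γ i).factorial
      = ∑ f ∈ W, (Finset.univ.filter fun g : Equiv.Perm α => f0 ∘ g = f).card := by
        rw [Finset.sum_congr rfl fun f hf => by
          rw [card_perm_comp f f0 (fun i => by rw [hc f hf, hc f0 h0])]]
        rw [Finset.sum_congr rfl fun f hf =>
          Finset.prod_congr rfl fun i _ => by rw [hc f hf i]]
        simp
    _ ≤ ∑ f : α → ι, (Finset.univ.filter fun g : Equiv.Perm α => f0 ∘ g = f).card :=
        Finset.sum_le_sum_of_subset (Finset.subset_univ _)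
    _ = (Finset.univ : Finset (Equiv.Perm α)).card :=
        (Finset.card_eq_sum_card_fiberwise (f := fun g : Equiv.Perm α => f0 ∘ g)
          (t := Finset.univ) (fun _ _ => Finset.mem_coe.2 (Finset.mem_univ _))).symm
    _ = _ := by rw [Finset.card_univ, Fintype.card_perm]
end Count

section Typ
variable {m M : ℕ}

/-- the type matrix of a permutation of the lifted index set -/
def typ (τ : Equiv.Perm (Fin m × Fin M)) (i j : Fin m) : ℕ :=
  Fintype.card {k : Fin M // (τ (i, k)).1 = j}

theorem typ_symm (τ : Equiv.Perm (Fin m × Fin M)) (i j : Fin m) :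
    Fintype.card {l : Fin M // (τ.symm (j, l)).1 = i} = typ τ i j := by
  symm
  refine Fintype.card_congr
    { toFun := fun k => ⟨(τ (i, k.1)).2, ?_⟩
      invFun := fun l => ⟨(τ.symm (j, l.1)).2, ?_⟩
      left_inv := ?_
      right_inv := ?_ }
  · have : (j, (τ (i, k.1)).2) = τ (i, k.1) := Prod.ext k.2.symm rfl
    rw [this]; simp
  · have : (i, (τ.symm (j, l.1)).2) = τ.symm (j, l.1) := Prod.ext l.2.symm rfl
    rw [this]; simp
  · intro k
    have : (j, (τ (i, k.1)).2) = τ (i, k.1) := Prod.ext k.2.symm rfl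
    apply Subtype.ext
    simp [this]
  · intro l
    have : (i, (τ.symm (j, l.1)).2) = τ.symm (j, l.1) := Prod.ext l.2.symm rfl
    apply Subtype.ext
    simp [this]

theorem sum_card_fib (f : Fin M → Fin m) : ∑ j, Fintype.card {k // f k = j} = M := by
  have := Finset.card_eq_sum_card_fiberwise (f := f) (s := Finset.univ)
    (t := Finset.univ) (fun _ _ => Finset.mem_coe.2 (Finset.mem_univ _))
  simp only [Fintype.card_subtype]
  rw [← this]; simp

theorem typ_mem (τ : Equiv.Perm (Fin m × Fin M)) : typ τ ∈ gam m M := by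
  rw [mem_gam]
  refine ⟨fun i => sum_card_fib _, fun j => ?_⟩
  rw [Finset.sum_congr rfl fun i _ => (typ_symm τ i j).symm]
  exact sum_card_fib fun l => (τ.symm (j, l)).1

/-- words with prescribed letter counts -/
def wordsF (M : ℕ) (γ : Fin m → ℕ) : Finset (Fin M → Fin m) :=
  Finset.univ.filter fun f => ∀ i, Fintype.card {a // f a = i} = γ i

/-- compatible pairs of given type -/
def compatF (m M : ℕ) (γ : Fin m → Fin m → ℕ) :
    Finset ((Fin m → Fin m → Equiv.Perm (Fin M)) × Equiv.Perm (Fin m × Fin M)) :=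
  Finset.univ.filter fun q => (∀ p, q.1 p.1 (q.2 p).1 p.2 = (q.2 p).2) ∧ typ q.2 = γ

/-- permutations matching the row words with the column words -/
def matchF (s t : Fin m → Fin M → Fin m) : Finset (Fin m → Fin m → Equiv.Perm (Fin M)) :=
  Fintype.piFinset fun i => Fintype.piFinset fun j => Finset.univ.filter
    fun g : Equiv.Perm (Fin M) => (fun l => decide (t j l = i)) ∘ g = fun k => decide (s i k = j)

theorem card_matchF (γ : Fin m → Fin m → ℕ) (s t : Fin m → Fin M → Fin m)
    (hs : ∀ i, s i ∈ wordsF M (γ i)) (ht : ∀ j, t j ∈ wordsF M (fun i => γ i j)) :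
    (matchF s t).card = ∏ i, ∏ j, ((γ i j).factorial * (M - γ i j).factorial) := by
  rw [matchF, Fintype.card_piFinset]
  refine Finset.prod_congr rfl fun i _ => ?_
  rw [Fintype.card_piFinset]
  refine Finset.prod_congr rfl fun j _ => ?_
  have key : ∀ (f : Fin M → Fin m) (x : Fin m) (n : ℕ), Fintype.card {a // f a = x} = n →
      ∀ b : Bool, Fintype.card {a // decide (f a = x) = b} = if b then n else M - n := by
    intro f x n h b
    cases b
    · simp only [decide_eq_false_iff_not]
      rw [Fintype.card_subtype_compl, h]; simp
    · simpa using h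
  have h1 := key (s i) j _ ((Finset.mem_filter.1 (hs i)).2 j)
  have h2 := key (t j) i _ ((Finset.mem_filter.1 (ht j)).2 i)
  rw [card_perm_comp _ _ fun b => by rw [h1 b, h2 b]]
  simp only [h1, Fintype.prod_bool]
  simp

theorem card_compat (γ : Fin m → Fin m → ℕ) :
    (compatF m M γ).card ≤ (∏ i, (wordsF M (γ i)).card) *
      (∏ j, (wordsF M (fun i => γ i j)).card) *
      ∏ i, ∏ j, ((γ i j).factorial * (M - γ i j).factorial) := by
  set S := Fintype.piFinset (fun i : Fin m => wordsF M (γ i)) with hS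
  set T := Fintype.piFinset (fun j : Fin m => wordsF M (fun i => γ i j)) with hT
  have hcard : ((S ×ˢ T).sigma fun st => matchF st.1 st.2).card =
      (∏ i, (wordsF M (γ i)).card) * (∏ j, (wordsF M (fun i => γ i j)).card) *
      ∏ i, ∏ j, ((γ i j).factorial * (M - γ i j).factorial) := by
    rw [Finset.card_sigma, Finset.sum_congr rfl fun st hst => card_matchF γ st.1 st.2
      (Fintype.mem_piFinset.1 (Finset.mem_product.1 hst).1)
      (Fintype.mem_piFinset.1 (Finset.mem_product.1 hst).2)]
    rw [Finset.sum_const, Finset.card_product, Fintype.card_piFinset,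
      Fintype.card_piFinset, smul_eq_mul]
  rw [← hcard]
  refine Finset.card_le_card_of_injOn (fun q => ⟨(fun i k => (q.2 (i, k)).1,
    fun j l => (q.2.symm (j, l)).1), q.1⟩) ?_ ?_
  · rintro ⟨σ, τ⟩ hq
    obtain ⟨hc, ht⟩ := (Finset.mem_filter.1 (Finset.mem_coe.1 hq)).2
    simp only at hc ht
    simp only [Finset.coe_sigma, Set.mem_sigma_iff, Finset.mem_coe, Finset.mem_product, hS, hT,
      Fintype.mem_piFinset, wordsF, matchF, Finset.mem_filter, Finset.mem_univ, true_and]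
    refine ⟨⟨fun i j => ?_, fun j i => ?_⟩, fun i j => ?_⟩
    · rw [← ht]; rfl
    · rw [← ht]; exact typ_symm τ i j
    · ext k
      simp only [Function.comp_apply]
      rw [decide_eq_decide]
      constructor
      · intro h
        have h1 : (i, (τ.symm (j, σ i j k)).2) = τ.symm (j, σ i j k) := Prod.ext h.symm rfl
        have h2 : τ (i, (τ.symm (j, σ i j k)).2) = (j, σ i j k) := by rw [h1]; simp
        have h3 := hc (i, (τ.symm (j, σ i j k)).2)
        rw [h2] at h3
        have h4 := (σ i j).injective h3
        simp only at h4
        rw [h4] at h2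
        rw [h2]
      · intro h
        have h3 := hc (i, k)
        simp only [h] at h3
        have : τ (i, k) = (j, σ i j k) := Prod.ext h h3.symm
        rw [← this]; simp
  · rintro ⟨σ, τ⟩ hq ⟨σ', τ'⟩ hq' heq
    have hc := (Finset.mem_filter.1 (Finset.mem_coe.1 hq)).2.1
    have hc' := (Finset.mem_filter.1 (Finset.mem_coe.1 hq')).2.1
    simp only [Sigma.mk.injEq, Prod.mk.injEq, heq_eq_eq] at heq hc hc'
    obtain ⟨⟨h1, -⟩, rfl⟩ := heq
    refine Prod.ext rfl (Equiv.ext fun p => ?_)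
    have h2 : (τ p).1 = (τ' p).1 := congrFun (congrFun h1 p.1) p.2
    refine Prod.ext h2 ?_
    rw [← hc, ← hc', h2]

theorem compat_le_coef (γ : Fin m → Fin m → ℕ) :
    ((compatF m M γ).card : ℝ) / ∏ _i : Fin m, ∏ _j : Fin m, (M.factorial : ℝ) ≤ coefB m M γ := by
  have hw : ∀ δ : Fin m → ℕ, ((wordsF M δ).card : ℝ) ≤ M.factorial / ∏ i, ((δ i).factorial : ℝ) := by
    intro δ
    rw [le_div_iff₀ (Finset.prod_pos fun i _ => by positivity)]
    have := card_words (α := Fin M) δ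
    rw [Fintype.card_fin] at this
    have this2 : (wordsF M δ).card * ∏ i, (δ i).factorial ≤ M.factorial := by
      unfold wordsF
      convert this
    exact_mod_cast this2
  rw [div_le_iff₀ (Finset.prod_pos fun i _ => Finset.prod_pos fun i _ => by positivity)]
  have h1 := Nat.cast_le (α := ℝ).2 (card_compat (M := M) γ)
  push_cast at h1
  refine h1.trans ?_
  have h2 : (∏ i, ((wordsF M (γ i)).card : ℝ)) ≤
      ∏ i, (M.factorial / ∏ j, ((γ i j).factorial : ℝ)) :=
    Finset.prod_le_prod (fun _ _ => by positivity) fun i _ => hw _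
  have h3 : (∏ j, ((wordsF M (fun i => γ i j)).card : ℝ)) ≤
      ∏ j, (M.factorial / ∏ i, ((γ i j).factorial : ℝ)) :=
    Finset.prod_le_prod (fun _ _ => by positivity) fun i _ => hw _
  refine (mul_le_mul_of_nonneg_right (mul_le_mul h2 h3 (by positivity) (by positivity))
    (by positivity)).trans (le_of_eq ?_)
  rw [coefB, Finset.prod_div_distrib, Finset.prod_div_distrib, Finset.prod_const,
    Finset.prod_comm (f := fun j i => ((γ i j).factorial : ℝ))]
  simp only [phi, Finset.prod_div_distrib, Finset.prod_mul_distrib, Finset.card_univ,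
    Fintype.card_fin]
  have p1 : (∏ i, ∏ j, ((γ i j).factorial : ℝ)) ≠ 0 := by positivity
  have p2 : (∏ _i : Fin m, ∏ _j : Fin m, (M.factorial : ℝ)) ≠ 0 := by positivity
  field_simp
  simp only [Finset.prod_const, Finset.card_univ, Fintype.card_fin]
  try ring

theorem betheAvg_le_sumB (θ : Matrix (Fin m) (Fin m) ℝ) (hθ : ∀ i j, 0 ≤ θ i j) :
    betheAvg M θ ≤ sumB M θ := by
  have hcard : (Fintype.card (Fin m → Fin m → Equiv.Perm (Fin M)) : ℝ) =
      ∏ _i : Fin m, ∏ _j : Fin m, (M.factorial : ℝ) := by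
    rw [Fintype.card_pi, Fintype.card_pi]
    simp [Fintype.card_perm]
  have hth : ∀ τ : Equiv.Perm (Fin m × Fin M), ∏ p, θ p.1 (τ p).1 = ∏ i, ∏ j, θ i j ^ typ τ i j := by
    intro τ
    rw [Fintype.prod_prod_type]
    refine Finset.prod_congr rfl fun i _ => ?_
    rw [← Finset.prod_fiberwise Finset.univ (fun k => (τ (i, k)).1)]
    refine Finset.prod_congr rfl fun j _ => ?_
    rw [typ, Fintype.card_subtype, ← Finset.prod_const]
    refine Finset.prod_congr rfl fun k hk => ?_
    change θ i (τ (i, k)).1 = θ i j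
    rw [(Finset.mem_filter.1 hk).2]
  have hsum : ∑ σ : Fin m → Fin m → Equiv.Perm (Fin M), (θ.plift σ).permanent =
      ∑ γ ∈ gam m M, (∏ i, ∏ j, θ i j ^ γ i j) * (compatF m M γ).card := by
    calc _ = ∑ σ : Fin m → Fin m → Equiv.Perm (Fin M), ∑ τ : Equiv.Perm (Fin m × Fin M),
          if (∀ p, σ p.1 (τ p).1 p.2 = (τ p).2) then ∏ i, ∏ j, θ i j ^ typ τ i j else 0 := by
          refine Finset.sum_congr rfl fun σ _ => ?_
          rw [← Matrix.permanent_transpose]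
          refine Finset.sum_congr rfl fun τ _ => ?_
          simp only [Matrix.transpose_apply, Matrix.plift, Matrix.of_apply]
          rw [Finset.prod_mul_distrib, hth, Finset.prod_ite_zero]
          simp
      _ = ∑ q : (Fin m → Fin m → Equiv.Perm (Fin M)) × Equiv.Perm (Fin m × Fin M) with
            (∀ p, q.1 p.1 (q.2 p).1 p.2 = (q.2 p).2), ∏ i, ∏ j, θ i j ^ typ q.2 i j := by
          rw [Finset.sum_filter, Fintype.sum_prod_type]
      _ = ∑ γ ∈ gam m M, ∑ q ∈ compatF m M γ, ∏ i, ∏ j, θ i j ^ typ q.2 i j := by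
          rw [← Finset.sum_fiberwise_of_maps_to (t := gam m M) (g := fun q => typ q.2)
            (fun q _ => typ_mem q.2)]
          refine Finset.sum_congr rfl fun γ _ => Finset.sum_congr ?_ fun _ _ => rfl
          rw [compatF, Finset.filter_filter]
      _ = _ := by
          refine Finset.sum_congr rfl fun γ _ => ?_
          rw [Finset.sum_congr rfl fun q hq => by rw [(Finset.mem_filter.1 hq).2.2],
            Finset.sum_const, nsmul_eq_mul, mul_comm]
  rw [betheAvg, hsum, hcard, Finset.sum_div, sumB]
  refine Finset.sum_le_sum fun γ _ => ?_
  rw [mul_div_assoc]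
  exact mul_le_mul_of_nonneg_left (compat_le_coef γ)
    (Finset.prod_nonneg fun i _ => Finset.prod_nonneg fun j _ => pow_nonneg (hθ i j) _)
end Typ

/-- The degree-`M` Bethe permanent of a nonnegative matrix is at most its permanent;
equivalently, the average over all `P ∈ 𝒫_M^m` of `perm (θ^↑P)` is at most `(perm θ)^M`. -/
theorem bethePermanent_le_permanent {m M : ℕ} (hM : 0 < M)
    (θ : Matrix (Fin m) (Fin m) ℝ) (hθ : ∀ i j, 0 ≤ θ i j) :
    bethePermanent M θ ≤ θ.permanent ∧ betheAvg M θ ≤ θ.permanent ^ M := by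
  have h := (betheAvg_le_sumB (M := M) θ hθ).trans (sumB_le M θ hθ)
  refine ⟨?_, h⟩
  have h0 : 0 ≤ betheAvg M θ := by
    refine div_nonneg (Finset.sum_nonneg fun σ _ => Finset.sum_nonneg fun τ _ =>
      Finset.prod_nonneg fun p _ => ?_) (Nat.cast_nonneg _)
    simp only [Matrix.plift, Matrix.of_apply]
    exact mul_nonneg (hθ _ _) (by split_ifs <;> simp)
  have h1 : 0 ≤ θ.permanent :=
    Finset.sum_nonneg fun τ _ => Finset.prod_nonneg fun p _ => hθ _ _
  have hM' : (0 : ℝ) ≤ (M : ℝ)⁻¹ := by positivity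
  calc bethePermanent M θ ≤ (θ.permanent ^ M) ^ ((M : ℝ)⁻¹) := Real.rpow_le_rpow h0 h hM'
    _ = θ.permanent := Real.pow_rpow_inv_natCast h1 hM.ne'
end

section
/- Let θ be an m×m matrix with nonnegative real entries. Then the Bethe permanent satisfies perm_B(θ) = limsup_{M→∞} perm_{B,M}(θ) ≤ perm(θ). -/
open scoped BigOperators

/-- The degree-`M` Bethe permanent `perm_{B,M}(θ) = ⟨perm(θ^↑P)⟩^{1/M}`. -/
noncomputable def betheDegM {m : ℕ} (M : ℕ) (θ : Matrix (Fin m) (Fin m) ℝ) : ℝ :=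
  (betheAvg M θ) ^ ((M : ℝ)⁻¹)

/-- The Bethe permanent `perm_B(θ) = limsup_{M → ∞} perm_{B,M}(θ)`. -/
noncomputable def bethe {m : ℕ} (θ : Matrix (Fin m) (Fin m) ℝ) : ℝ :=
  Filter.limsup (fun M : ℕ => betheDegM M θ) Filter.atTop


namespace BetheAux

open Finset

variable {m M : ℕ}

/-- A half-edge configuration: every row chooses a column and every column chooses a row. -/
abbrev Conf (m : ℕ) := (Fin m → Fin m) × (Fin m → Fin m)

/-- The vertices reached from row `i0` by the alternating walk: rows follow `U`, columns follow
`V`, along edges of `E`. -/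
inductive Reach (E : Finset (Fin m × Fin m)) (U V : Conf m) (i0 : Fin m) :
    Fin m ⊕ Fin m → Prop
  | base : Reach E U V i0 (Sum.inl i0)
  | row (r : Fin m) : Reach E U V i0 (Sum.inl r) → (r, U.1 r) ∈ E →
      Reach E U V i0 (Sum.inr (U.1 r))
  | col (c : Fin m) : Reach E U V i0 (Sum.inr c) → (V.2 c, c) ∈ E →
      Reach E U V i0 (Sum.inl (V.2 c))

/-- The configuration agrees on the edges in `E`. -/
def Agree (E : Finset (Fin m × Fin m)) (U : Conf m) : Prop :=
  ∀ e ∈ E, (U.1 e.1 = e.2 ↔ U.2 e.2 = e.1)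

theorem reach_iff {E : Finset (Fin m × Fin m)} {U V : Conf m} {i0 : Fin m}
    (hU : Agree E U) (hV : Agree E V) (h0 : (i0, V.1 i0) ∉ E) {r c : Fin m} (hrc : (r, c) ∈ E)
    (h : U.1 r = c ∨ V.1 r = c) :
    Reach E U V i0 (Sum.inl r) ↔ Reach E U V i0 (Sum.inr c) := by
  constructor
  · intro hr
    rcases h with h | h
    · subst h; exact Reach.row r hr hrc
    · cases hr with
      | base => subst h; exact absurd hrc h0
      | col c' hc' he =>
        have := (hV _ he).2 rfl
        simp only at this
        rw [← h, this]; exact hc'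
  · intro hc
    rcases h with h | h
    · cases hc with
      | row r' hr' he =>
        have h1 := (hU _ he).1 rfl
        have h2 := (hU _ hrc).1 h
        simp only at h1 h2
        rw [← h2, h1]; exact hr'
    · have h2 := (hV _ hrc).1 h
      simp only at h2
      rw [← h2] at hrc ⊢
      exact Reach.col c hc hrc

open Classical in
/-- The sheet permutation used at a vertex: trivial on the reached set, the swap elsewhere. -/
noncomputable def flip (E : Finset (Fin m × Fin m)) (i0 : Fin m) (s t : Fin M)
    (X : Fin M → Conf m) (x : Fin m ⊕ Fin m) : Equiv.Perm (Fin M) :=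
  if Reach E (X s) (X t) i0 x then 1 else Equiv.swap s t

/-- The swapping map on tuples of configurations. -/
noncomputable def phi (E : Finset (Fin m × Fin m)) (i0 : Fin m) (s t : Fin M)
    (X : Fin M → Conf m) : Fin M → Conf m := fun p =>
  (fun i => (X (flip E i0 s t X (Sum.inl i) p)).1 i,
   fun j => (X (flip E i0 s t X (Sum.inr j) p)).2 j)

theorem reach_phi (E : Finset (Fin m × Fin m)) (i0 : Fin m) (s t : Fin M)
    (X : Fin M → Conf m) (x : Fin m ⊕ Fin m) :
    Reach E (phi E i0 s t X s) (phi E i0 s t X t) i0 x ↔ Reach E (X s) (X t) i0 x := by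
  constructor
  · intro h
    induction h with
    | base => exact Reach.base
    | row r hr he ih =>
      have : (phi E i0 s t X s).1 r = (X s).1 r := by simp [phi, flip, ih]
      rw [this] at he ⊢
      exact Reach.row r ih he
    | col c hc he ih =>
      have : (phi E i0 s t X t).2 c = (X t).2 c := by simp [phi, flip, ih]
      rw [this] at he ⊢
      exact Reach.col c ih he
  · intro h
    induction h with
    | base => exact Reach.base
    | row r hr he ih =>
      have : (phi E i0 s t X s).1 r = (X s).1 r := by simp [phi, flip, hr]
      rw [← this] at he ⊢
      exact Reach.row r ih he
    | col c hc he ih =>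
      have : (phi E i0 s t X t).2 c = (X t).2 c := by simp [phi, flip, hc]
      rw [← this] at he ⊢
      exact Reach.col c ih he

theorem flip_phi (E : Finset (Fin m × Fin m)) (i0 : Fin m) (s t : Fin M)
    (X : Fin M → Conf m) : flip E i0 s t (phi E i0 s t X) = flip E i0 s t X := by
  funext x
  unfold flip
  by_cases h : Reach E (X s) (X t) i0 x
  · rw [if_pos h, if_pos ((reach_phi E i0 s t X x).2 h)]
  · rw [if_neg h, if_neg (fun h' => h ((reach_phi E i0 s t X x).1 h'))]

theorem flip_flip (E : Finset (Fin m × Fin m)) (i0 : Fin m) (s t : Fin M)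
    (X : Fin M → Conf m) (x p) : flip E i0 s t X x (flip E i0 s t X x p) = p := by
  unfold flip
  split_ifs <;> simp

theorem phi_phi (E : Finset (Fin m × Fin m)) (i0 : Fin m) (s t : Fin M)
    (X : Fin M → Conf m) : phi E i0 s t (phi E i0 s t X) = X := by
  funext p
  have : phi E i0 s t (phi E i0 s t X) p =
    (fun i => (phi E i0 s t X (flip E i0 s t X (Sum.inl i) p)).1 i,
     fun j => (phi E i0 s t X (flip E i0 s t X (Sum.inr j) p)).2 j) := by
    conv_rhs => rw [← flip_phi E i0 s t X]
    rfl
  rw [this]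
  simp only [phi, flip_flip]

theorem agree_phi {E : Finset (Fin m × Fin m)} {i0 : Fin m} {s t : Fin M}
    {X : Fin M → Conf m} (hX : ∀ p, Agree E (X p)) (h0 : (i0, (X t).1 i0) ∉ E) (p : Fin M) :
    Agree E (phi E i0 s t X p) := by
  rintro ⟨r, c⟩ he
  have key := fun h => reach_iff (hX s) (hX t) h0 he h
  have key2 : ∀ q, q = s ∨ q = t → ((X q).1 r = c ∨ (X q).2 c = r) →
      (Reach E (X s) (X t) i0 (Sum.inl r) ↔ Reach E (X s) (X t) i0 (Sum.inr c)) := by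
    intro q hq h
    have h' : (X q).1 r = c := h.elim id (fun h => (hX q _ he).2 h)
    rcases hq with rfl | rfl
    · exact key (Or.inl h')
    · exact key (Or.inr h')
  have hs := hX s _ he
  have ht := hX t _ he
  have hp := hX p _ he
  by_cases hps : p = s
  · subst hps
    have k1 := key2 p (Or.inl rfl)
    have k2 := key2 t (Or.inr rfl)
    simp only [phi, flip] at *
    by_cases a : Reach E (X p) (X t) i0 (Sum.inl r) <;>
    by_cases b : Reach E (X p) (X t) i0 (Sum.inr c) <;> simp [a, b] at * <;> tauto
  · by_cases hpt : p = t
    · subst hpt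
      have k1 := key2 s (Or.inl rfl)
      have k2 := key2 p (Or.inr rfl)
      simp only [phi, flip] at *
      by_cases a : Reach E (X s) (X p) i0 (Sum.inl r) <;>
      by_cases b : Reach E (X s) (X p) i0 (Sum.inr c) <;> simp [a, b] at * <;> tauto
    · have hsw : ∀ x, flip E i0 s t X x p = p := by
        intro x; unfold flip
        split_ifs
        · rfl
        · exact Equiv.swap_apply_of_ne_of_ne hps hpt
      simp only [phi, hsw]
      exact hp

/-- The sheets on which row `e.1` uses `e`. -/
def rowSet (X : Fin M → Conf m) (e : Fin m × Fin m) : Finset (Fin M) :=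
  univ.filter fun p => (X p).1 e.1 = e.2

/-- The sheets on which column `e.2` uses `e`. -/
def colSet (X : Fin M → Conf m) (e : Fin m × Fin m) : Finset (Fin M) :=
  univ.filter fun p => (X p).2 e.2 = e.1

theorem mem_rowSet {X : Fin M → Conf m} {e : Fin m × Fin m} {p : Fin M} :
    p ∈ rowSet X e ↔ (X p).1 e.1 = e.2 := by simp [rowSet]

theorem mem_colSet {X : Fin M → Conf m} {e : Fin m × Fin m} {p : Fin M} :
    p ∈ colSet X e ↔ (X p).2 e.2 = e.1 := by simp [colSet]

/-- Probability that a uniform permutation maps `R` onto `T`. -/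
noncomputable def v (R T : Finset (Fin M)) : ℝ :=
  (∑ P : Equiv.Perm (Fin M), if (∀ p, p ∈ R ↔ P p ∈ T) then (1 : ℝ) else 0) /
    (Fintype.card (Equiv.Perm (Fin M)) : ℝ)

theorem v_nonneg (R T : Finset (Fin M)) : 0 ≤ v R T := by
  unfold v
  refine div_nonneg (sum_nonneg fun P _ => ?_) (Nat.cast_nonneg _)
  split_ifs <;> norm_num

theorem v_card {R T : Finset (Fin M)} (h : v R T ≠ 0) : R.card = T.card := by
  by_contra hne
  apply h
  unfold v
  rw [sum_eq_zero, zero_div]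
  intro P _
  rw [if_neg]
  intro hP
  apply hne
  refine card_bij (fun p _ => P p) (fun p hp => (hP p).1 hp) (fun a _ b _ hab => P.injective hab) ?_
  intro q hq
  exact ⟨P.symm q, (hP _).2 (by simpa using hq), by simp⟩

theorem v_sum (R : Finset (Fin M)) : ∑ T, v R T = 1 := by
  unfold v
  rw [← sum_div, sum_comm]
  have : ∀ P : Equiv.Perm (Fin M),
      ∑ T : Finset (Fin M), (if (∀ p, p ∈ R ↔ P p ∈ T) then (1 : ℝ) else 0) = 1 := by
    intro P
    have h : ∀ T : Finset (Fin M), (∀ p, p ∈ R ↔ P p ∈ T) ↔ R.map P.toEmbedding = T := by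
      intro T
      constructor
      · intro h
        ext q
        have := h (P.symm q)
        simp only [Equiv.apply_symm_apply] at this
        rw [← this]
        simp [mem_map_equiv]
      · rintro rfl p
        simp
    simp [h]
  rw [sum_congr rfl fun P _ => this P]
  have : (Fintype.card (Equiv.Perm (Fin M)) : ℝ) ≠ 0 := by
    exact_mod_cast Fintype.card_ne_zero
  simp only [sum_const, card_univ, nsmul_eq_mul, mul_one]
  exact div_self this

theorem v_inv {R T R' T' : Finset (Fin M)} (a b : Equiv.Perm (Fin M))
    (hR : ∀ p, p ∈ R' ↔ a p ∈ R) (hT : ∀ p, p ∈ T' ↔ b p ∈ T) : v R' T' = v R T := by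
  unfold v
  congr 1
  refine Fintype.sum_equiv ((Equiv.mulLeft b).trans (Equiv.mulRight a⁻¹)) _ _ ?_
  intro P
  congr 1
  simp only [hR, hT, eq_iff_iff]
  constructor
  · intro h p
    have := h (a⁻¹ p)
    simpa using this
  · intro h p
    have := h (a p)
    simpa using this

/-- The product of the entries of `θ`. -/
def wt (θ : Matrix (Fin m) (Fin m) ℝ) (X : Fin M → Conf m) : ℝ :=
  ∏ p, ∏ i, θ i ((X p).1 i)

theorem wt_phi (θ : Matrix (Fin m) (Fin m) ℝ) (E : Finset (Fin m × Fin m)) (i0 : Fin m)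
    (s t : Fin M) (X : Fin M → Conf m) : wt θ (phi E i0 s t X) = wt θ X := by
  unfold wt
  rw [prod_comm]
  conv_rhs => rw [prod_comm]
  refine prod_congr rfl fun i _ => ?_
  exact Equiv.prod_comp (flip E i0 s t X (Sum.inl i)) (fun p => θ i ((X p).1 i))

theorem v_phi (E : Finset (Fin m × Fin m)) (i0 : Fin m)
    (s t : Fin M) (X : Fin M → Conf m) (e : Fin m × Fin m) :
    v (rowSet (phi E i0 s t X) e) (colSet (phi E i0 s t X) e) = v (rowSet X e) (colSet X e) := by
  refine v_inv (flip E i0 s t X (Sum.inl e.1)) (flip E i0 s t X (Sum.inr e.2)) ?_ ?_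
  · intro p; simp only [mem_rowSet, phi]
  · intro p; simp only [mem_colSet, phi]

open Classical in
/-- The tuples agreeing on `E`. -/
noncomputable def good (M : ℕ) (E : Finset (Fin m × Fin m)) : Finset (Fin M → Conf m) :=
  univ.filter fun X => ∀ p, Agree E (X p)

theorem mem_good {E : Finset (Fin m × Fin m)} {X : Fin M → Conf m} :
    X ∈ good M E ↔ ∀ p, Agree E (X p) := by simp [good]

/-- Weight of a tuple: the edges in `D` are averaged. -/
noncomputable def Q (θ : Matrix (Fin m) (Fin m) ℝ) (D : Finset (Fin m × Fin m))
    (X : Fin M → Conf m) : ℝ := wt θ X * ∏ e ∈ D, v (rowSet X e) (colSet X e)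

theorem Q_nonneg {θ : Matrix (Fin m) (Fin m) ℝ} (hθ : ∀ i j, 0 ≤ θ i j)
    (D : Finset (Fin m × Fin m)) (X : Fin M → Conf m) : 0 ≤ Q θ D X :=
  mul_nonneg (prod_nonneg fun _ _ => prod_nonneg fun _ _ => hθ _ _)
    (prod_nonneg fun _ _ => v_nonneg _ _)

theorem Q_phi (θ : Matrix (Fin m) (Fin m) ℝ) (D E : Finset (Fin m × Fin m)) (i0 : Fin m)
    (s t : Fin M) (X : Fin M → Conf m) : Q θ D (phi E i0 s t X) = Q θ D X := by
  unfold Q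
  rw [wt_phi]
  simp only [v_phi]

/-- The partial sum with prescribed use of `e`. -/
noncomputable def S (θ : Matrix (Fin m) (Fin m) ℝ) (D E : Finset (Fin m × Fin m))
    (e : Fin m × Fin m) (R T : Finset (Fin M)) : ℝ :=
  ∑ X ∈ (good M E).filter (fun X => rowSet X e = R ∧ colSet X e = T), Q θ D X

theorem S_step {θ : Matrix (Fin m) (Fin m) ℝ} (hθ : ∀ i j, 0 ≤ θ i j)
    (D E : Finset (Fin m × Fin m)) {e : Fin m × Fin m} (he : e ∉ E) (R T : Finset (Fin M))
    {s t : Fin M} (hsR : s ∉ R) (hsT : s ∈ T) (htR : t ∈ R) (htT : t ∉ T) :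
    S θ D E e R T ≤ S θ D E e R (insert t (T.erase s)) := by
  have hst : s ≠ t := fun h => hsR (h ▸ htR)
  unfold S
  have hinj : Function.Injective (phi E e.1 s t) := by
    intro X Y h
    rw [← phi_phi E e.1 s t X, h, phi_phi]
  have h1 : ∑ X ∈ (good M E).filter (fun X => rowSet X e = R ∧ colSet X e = T), Q θ D X
      = ∑ Y ∈ ((good M E).filter (fun X => rowSet X e = R ∧ colSet X e = T)).image
          (phi E e.1 s t), Q θ D Y := by
    rw [sum_image (fun a _ b _ h => hinj h)]
    simp only [Q_phi]
  rw [h1]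
  refine sum_le_sum_of_subset_of_nonneg ?_ (fun _ _ _ => Q_nonneg hθ _ _)
  intro Y hY
  rw [mem_image] at hY
  obtain ⟨X, hX, rfl⟩ := hY
  simp only [mem_filter, mem_good] at hX ⊢
  obtain ⟨hA, rfl, rfl⟩ := hX
  simp only [mem_rowSet, mem_colSet] at hsR hsT htR htT
  have h0 : (e.1, (X t).1 e.1) ∉ E := by rw [htR]; exact he
  have hrow : Reach E (X s) (X t) e.1 (Sum.inl e.1) := Reach.base
  have hcol : ¬ Reach E (X s) (X t) e.1 (Sum.inr e.2) := by
    intro h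
    generalize hc : e.2 = c at h
    cases h with
    | row r hr hE =>
      have h2 := (hA s _ hE).1 rfl
      simp only at h2
      rw [← hc, hsT] at h2
      subst h2
      rw [← hc] at hE
      exact he hE
  refine ⟨agree_phi hA h0, ?_, ?_⟩
  · ext p
    simp [mem_rowSet, phi, flip, hrow]
  · ext p
    simp only [mem_colSet, phi, flip, hcol, if_false, mem_insert, mem_erase]
    by_cases hps : p = s
    · subst hps; simp [htT, hst]
    · by_cases hpt : p = t
      · subst hpt; simp [hsT]
      · rw [Equiv.swap_apply_of_ne_of_ne hps hpt]; simp [hps, hpt]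

theorem S_le {θ : Matrix (Fin m) (Fin m) ℝ} (hθ : ∀ i j, 0 ≤ θ i j)
    (D E : Finset (Fin m × Fin m)) {e : Fin m × Fin m} (he : e ∉ E) (R : Finset (Fin M)) :
    ∀ (n : ℕ) (T : Finset (Fin M)), R.card = T.card → (R \ T).card = n →
      S θ D E e R T ≤ S θ D E e R R := by
  intro n
  induction n with
  | zero =>
    intro T hc h
    rw [card_eq_zero, sdiff_eq_empty_iff_subset] at h
    rw [eq_of_subset_of_card_le h hc.ge]
  | succ n ih =>
    intro T hc h
    obtain ⟨t, ht⟩ : (R \ T).Nonempty := by rw [← card_pos]; omega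
    have h2 : (T \ R).card = (R \ T).card := (card_sdiff_comm hc).symm
    obtain ⟨s, hs⟩ : (T \ R).Nonempty := by rw [← card_pos]; omega
    have ht0 := ht
    rw [mem_sdiff] at ht hs
    refine (S_step hθ D E he R T hs.2 hs.1 ht.1 ht.2).trans (ih _ ?_ ?_)
    · rw [card_insert_of_notMem (by simp [ht.2]), card_erase_of_mem hs.1]
      have := card_pos.2 ⟨s, hs.1⟩
      omega
    · have : R \ insert t (T.erase s) = (R \ T).erase t := by
        ext p
        simp only [mem_sdiff, mem_insert, mem_erase]
        have : p = s → p ∉ R := fun h => h ▸ hs.2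
        tauto
      rw [this, card_erase_of_mem ht0, h]
      rfl

/-- The hybrid sum. -/
noncomputable def H (M : ℕ) (θ : Matrix (Fin m) (Fin m) ℝ) (E : Finset (Fin m × Fin m)) : ℝ :=
  ∑ X ∈ good M E, Q θ Eᶜ X

theorem H_step {θ : Matrix (Fin m) (Fin m) ℝ} (hθ : ∀ i j, 0 ≤ θ i j)
    (E : Finset (Fin m × Fin m)) {e : Fin m × Fin m} (he : e ∉ E) :
    H M θ E ≤ H M θ (insert e E) := by
  set D := (insert e E)ᶜ with hD
  have hDe : Eᶜ = insert e D := by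
    ext x
    simp only [hD, mem_compl, mem_insert]
    by_cases hx : x = e
    · subst hx; simp [he]
    · simp [hx]
  have heD : e ∉ D := by simp [hD]
  have hQ : ∀ X : Fin M → Conf m, Q θ Eᶜ X = v (rowSet X e) (colSet X e) * Q θ D X := by
    intro X
    unfold Q
    rw [hDe, prod_insert heD]; ring
  have hL : H M θ E = ∑ R : Finset (Fin M), ∑ T : Finset (Fin M), v R T * S θ D E e R T := by
    unfold H
    rw [← Fintype.sum_prod_type' (f := fun R T => v R T * S θ D E e R T)]
    rw [← sum_fiberwise (good M E) (fun X => (rowSet X e, colSet X e))]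
    refine sum_congr rfl ?_
    rintro ⟨R, T⟩ _
    unfold S
    rw [mul_sum]
    simp only [Prod.mk.injEq]
    refine sum_congr rfl fun X hX => ?_
    rw [mem_filter] at hX
    rw [hQ, hX.2.1, hX.2.2]
  have hR : H M θ (insert e E) = ∑ R : Finset (Fin M), S θ D E e R R := by
    unfold H
    rw [← sum_fiberwise (good M (insert e E)) (fun X => rowSet X e)]
    refine sum_congr rfl fun R _ => ?_
    unfold S
    refine sum_congr ?_ fun _ _ => rfl
    ext X
    simp only [mem_filter, mem_good, Agree, forall_mem_insert]
    have : (∀ p, ((X p).1 e.1 = e.2 ↔ (X p).2 e.2 = e.1)) ↔ rowSet X e = colSet X e := by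
      simp [mem_rowSet, mem_colSet, Finset.ext_iff]
    rw [forall_and, this]
    constructor
    · rintro ⟨⟨h1, h2⟩, h3⟩
      exact ⟨h2, h3, h1 ▸ h3⟩
    · rintro ⟨h1, h2, h3⟩
      exact ⟨⟨h2.trans h3.symm, h1⟩, h2⟩
  rw [hL, hR]
  refine sum_le_sum fun R _ => ?_
  calc ∑ T, v R T * S θ D E e R T ≤ ∑ T, v R T * S θ D E e R R := by
        refine sum_le_sum fun T _ => ?_
        by_cases h : v R T = 0
        · simp [h]
        · exact mul_le_mul_of_nonneg_left (S_le hθ D E he R _ T (v_card h) rfl) (v_nonneg _ _)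
    _ = S θ D E e R R := by rw [← sum_mul, v_sum, one_mul]

theorem H_mono {θ : Matrix (Fin m) (Fin m) ℝ} (hθ : ∀ i j, 0 ≤ θ i j)
    (E : Finset (Fin m × Fin m)) : H M θ ∅ ≤ H M θ E := by
  induction E using Finset.induction_on with
  | empty => exact le_rfl
  | insert e E he ih => exact ih.trans (H_step hθ E he)

theorem H_univ {θ : Matrix (Fin m) (Fin m) ℝ} (hθ : ∀ i j, 0 ≤ θ i j) :
    H M θ univ ≤ θ.permanent ^ M := by
  have hp : θ.permanent ^ M = ∑ τ : Fin M → Equiv.Perm (Fin m), ∏ p, ∏ i, θ i (τ p i) := by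
    rw [← Matrix.permanent_transpose]
    unfold Matrix.permanent
    simp only [Matrix.transpose_apply]
    have h := prod_univ_sum (fun _ : Fin M => (univ : Finset (Equiv.Perm (Fin m))))
      (fun _ τ => ∏ i, θ i (τ i))
    rw [Fintype.piFinset_univ, prod_const, card_univ, Fintype.card_fin] at h
    exact h
  rw [hp]
  have hs : H M θ univ = ∑ X ∈ good M univ, wt θ X := by
    unfold H Q; simp
  rw [hs]
  let g : (Fin M → Equiv.Perm (Fin m)) → (Fin M → Conf m) := fun τ p => (τ p, (τ p).symm)
  have hg : Function.Injective g := by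
    intro a b h
    funext p
    have := congrFun h p
    simp only [g, Prod.mk.injEq] at this
    exact DFunLike.coe_injective this.1
  have : ∑ τ : Fin M → Equiv.Perm (Fin m), ∏ p, ∏ i, θ i (τ p i)
      = ∑ X ∈ univ.image g, wt θ X := by
    rw [sum_image (fun a _ b _ h => hg h)]
    rfl
  rw [this]
  refine sum_le_sum_of_subset_of_nonneg ?_
    (fun _ _ _ => prod_nonneg fun _ _ => prod_nonneg fun _ _ => hθ _ _)
  intro X hX
  simp only [mem_good, Agree, mem_univ, forall_true_left, Prod.forall] at hX
  rw [mem_image]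
  refine ⟨fun p => ⟨(X p).1, (X p).2, fun i => (hX p i _).1 rfl, fun j => (hX p _ j).2 rfl⟩,
    mem_univ _, ?_⟩
  rfl

theorem perm_plift_le {θ : Matrix (Fin m) (Fin m) ℝ} (hθ : ∀ i j, 0 ≤ θ i j)
    (σ : Fin m → Fin m → Equiv.Perm (Fin M)) :
    (θ.plift σ).permanent ≤ ∑ X : Fin M → Conf m, wt θ X *
      ∏ i, ∏ j, (if (∀ p, p ∈ rowSet X (i, j) ↔ σ i j p ∈ colSet X (i, j)) then (1 : ℝ) else 0) := by
  rw [← Matrix.permanent_transpose]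
  unfold Matrix.permanent
  simp only [Matrix.transpose_apply]
  let C : Finset (Equiv.Perm (Fin m × Fin M)) :=
    univ.filter fun τ => ∀ p : Fin m × Fin M, σ p.1 (τ p).1 p.2 = (τ p).2
  let g : Equiv.Perm (Fin m × Fin M) → (Fin M → Conf m) := fun τ p =>
    (fun i => (τ (i, p)).1, fun j => (τ.symm (j, p)).1)
  have h1 : ∑ τ : Equiv.Perm (Fin m × Fin M), ∏ p, θ.plift σ p (τ p)
      = ∑ τ ∈ C, ∏ p : Fin m × Fin M, θ p.1 (τ p).1 := by
    rw [← sum_subset (subset_univ C)]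
    · refine sum_congr rfl fun τ hτ => prod_congr rfl fun p _ => ?_
      have := (mem_filter.1 hτ).2 p
      simp [Matrix.plift, this]
    · intro τ _ hτ
      simp only [C, mem_filter, mem_univ, true_and, not_forall] at hτ
      obtain ⟨p, hp⟩ := hτ
      exact prod_eq_zero (mem_univ p) (by simp [Matrix.plift, hp])
  have hg : Set.InjOn g C := by
    intro a ha b hb hab
    have ha' := (mem_filter.1 ha).2
    have hb' := (mem_filter.1 hb).2
    ext1 ⟨i, p⟩
    have h := congrFun (congrArg Prod.fst (congrFun hab p)) i
    simp only [g] at h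
    have h2 := ha' (i, p)
    have h3 := hb' (i, p)
    simp only at h2 h3
    exact Prod.ext h (by rw [← h2, ← h3, h])
  rw [h1]
  have hnn : ∀ X : Fin M → Conf m, 0 ≤ wt θ X *
      ∏ i, ∏ j, (if (∀ p, p ∈ rowSet X (i, j) ↔ σ i j p ∈ colSet X (i, j)) then (1 : ℝ) else 0) := by
    intro X
    refine mul_nonneg (prod_nonneg fun _ _ => prod_nonneg fun _ _ => hθ _ _)
      (prod_nonneg fun _ _ => prod_nonneg fun _ _ => ?_)
    split_ifs <;> norm_num
  refine le_trans (le_of_eq ?_)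
    (sum_le_sum_of_subset_of_nonneg (subset_univ (C.image g)) (fun X _ _ => hnn X))
  rw [sum_image hg]
  refine sum_congr rfl fun τ hτ => ?_
  have hτ' := (mem_filter.1 hτ).2
  have hone : ∏ i, ∏ j, (if (∀ p, p ∈ rowSet (g τ) (i, j) ↔ σ i j p ∈ colSet (g τ) (i, j))
      then (1 : ℝ) else 0) = 1 := by
    refine prod_eq_one fun i _ => prod_eq_one fun j _ => ?_
    rw [if_pos]
    intro p
    simp only [mem_rowSet, mem_colSet, g]
    have h := hτ' (i, p)
    simp only at h
    constructor
    · intro hj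
      have : τ (i, p) = (j, σ i j p) := Prod.ext hj (by rw [← h, hj])
      rw [← this]; simp
    · intro hi
      generalize hq : τ.symm (j, σ i j p) = q at hi
      have hq' : τ q = (j, σ i j p) := by rw [← hq]; simp
      have h3 := hτ' q
      rw [hq', hi] at h3
      have : q = (i, p) := Prod.ext hi ((σ i j).injective h3)
      rw [← this, hq']
  rw [hone, mul_one]
  unfold wt
  rw [Fintype.prod_prod_type, prod_comm]

theorem avg_le {θ : Matrix (Fin m) (Fin m) ℝ} (hθ : ∀ i j, 0 ≤ θ i j) :
    betheAvg M θ ≤ θ.permanent ^ M := by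
  refine le_trans ?_ ((H_mono (M := M) hθ univ).trans (H_univ hθ))
  unfold betheAvg
  refine (div_le_div_of_nonneg_right (sum_le_sum fun σ _ => perm_plift_le hθ σ)
    (Nat.cast_nonneg _)).trans (le_of_eq ?_)
  rw [sum_comm, sum_div]
  have : good M (∅ : Finset (Fin m × Fin m)) = univ := by
    simp [good, Agree]
  unfold H
  rw [this]
  refine sum_congr rfl fun X _ => ?_
  unfold Q v
  rw [← mul_sum, mul_div_assoc]
  congr 1
  rw [compl_empty, Fintype.prod_prod_type]
  simp only [prod_div_distrib]
  congr 1
  · simp_rw [prod_univ_sum, Fintype.piFinset_univ]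
  · simp

end BetheAux

/-- The Bethe permanent of a nonnegative matrix is at most its permanent. -/
theorem bethe_le_permanent {m : ℕ} (θ : Matrix (Fin m) (Fin m) ℝ)
    (hθ : ∀ i j, 0 ≤ θ i j) :
    bethe θ ≤ θ.permanent := by
  have hperm : 0 ≤ θ.permanent :=
    Finset.sum_nonneg fun _ _ => Finset.prod_nonneg fun _ _ => hθ _ _
  have havg : ∀ M, 0 ≤ betheAvg M θ := by
    intro M
    refine div_nonneg (Finset.sum_nonneg fun σ _ => Finset.sum_nonneg fun _ _ =>
      Finset.prod_nonneg fun _ _ => ?_) (Nat.cast_nonneg _)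
    simp only [Matrix.plift, Matrix.of_apply]
    refine mul_nonneg (hθ _ _) ?_
    split_ifs <;> norm_num
  unfold bethe
  refine Filter.limsup_le_of_le ?_ ?_
  · refine Filter.IsCoboundedUnder.of_frequently_ge (a := 0) ?_
    exact Filter.Frequently.of_forall fun M => Real.rpow_nonneg (havg M) _
  · filter_upwards [Filter.eventually_gt_atTop 0] with M hM
    unfold betheDegM
    have h1 := Real.rpow_le_rpow (havg M) (BetheAux.avg_le (M := M) hθ)
      (inv_nonneg.2 (Nat.cast_nonneg M))
    rwa [Real.pow_rpow_inv_natCast hperm hM.ne'] at h1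
end
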